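/- Let Ω ⊆ ℝ^d (d ≥ 2) be a compact convex polytope with positive Lebesgue measure that is not centrally symmetric, and let g = |Ω|^{-1/2} χ_Ω. Then, after applying a suitable invertible affine transformation to Ω, there exist ε > 0, R > 0, and δ > 0 such that for all t ∈ ℝ^d with |t| < ε and all λ ∈ S(2δ) \ B_R(0), where S(r) = { s e_1 + w : s ∈ ℝ, w ∈ ℝ^d, |w| < r } is the open cylinder of radius r about the x_1-axis and B_R(0) the open ball of radius R about the origin, one has V_g g(t, λ) ≠ 0. -/

import Mathlib

open MeasureTheory Complex
open scoped Real ComplexConjugate InnerProductSpace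

section
open Set Filter Topology
open scoped ENNReal

theorem bm_compact {A B M : Set ℝ} (hA : IsCompact A) (hB : IsCompact B) (hA0 : A.Nonempty)
    (hB0 : B.Nonempty) (h : ∀ a ∈ A, ∀ b ∈ B, (a + b) / 2 ∈ M) :
    volume A + volume B ≤ 2 * volume M := by
  obtain ⟨a, ha, ham⟩ := hA.exists_isGreatest hA0
  obtain ⟨b, hb, hbm⟩ := hB.exists_isLeast hB0
  set X := (fun x : ℝ => (1/2 : ℝ) * x + b / 2) '' A
  set Z := (fun x : ℝ => (1/2 : ℝ) * x + a / 2) '' B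
  have sc : ∀ (s : Set ℝ) (c : ℝ), volume ((fun x : ℝ => (1/2 : ℝ) * x + c) '' s)
      = volume s / 2 := by
    intro s c
    have : (fun x : ℝ => (1/2 : ℝ) * x + c) '' s = (fun y => y + c) '' ((fun x => (1/2:ℝ) • x) '' s) := by
      rw [image_image]; simp
    rw [this]
    rw [Set.image_add_right, measure_preimage_add_right, Set.image_smul, Measure.addHaar_smul]
    simp
    rw [mul_comm]; rfl
  have hXM : X ⊆ M := by
    rintro _ ⟨x, hx, rfl⟩
    have := h x hx b hb
    convert this using 1; ring
  have hZM : Z ⊆ M := by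
    rintro _ ⟨x, hx, rfl⟩
    have := h a ha x hx
    convert this using 1; ring
  have hXZ : volume (X ∩ Z) = 0 := by
    refine measure_mono_null (t := {(a + b)/2}) ?_ (by simp)
    rintro y ⟨⟨x, hx, rfl⟩, ⟨z, hz, hxz⟩⟩
    have h1 := ham hx
    have h2 := hbm hz
    simp only [mem_singleton_iff] at *
    linarith
  have hZc : IsCompact Z := hB.image (by fun_prop)
  have := measure_union_add_inter (μ := volume) X hZc.measurableSet
  rw [hXZ, add_zero, sc, sc] at this
  have h3 : volume A / 2 + volume B / 2 ≤ volume M := by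
    rw [← this]; exact measure_mono (union_subset hXM hZM)
  calc volume A + volume B = 2 * (volume A / 2 + volume B / 2) := by
        rw [mul_add, ENNReal.mul_div_cancel (by simp) (by simp), ENNReal.mul_div_cancel (by simp) (by simp)]
    _ ≤ _ := by gcongr

theorem bm_one {A B M : Set ℝ} (hA : MeasurableSet A) (hB : MeasurableSet B) (hA0 : A.Nonempty)
    (hB0 : B.Nonempty) (h : ∀ a ∈ A, ∀ b ∈ B, (a + b) / 2 ∈ M) :
    volume A + volume B ≤ 2 * volume M := by
  have key : ∀ K ⊆ A, IsCompact K → ∀ L ⊆ B, IsCompact L → volume K + volume L ≤ 2 * volume M := by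
    intro K hK hKc L hL hLc
    obtain ⟨a, ha⟩ := hA0
    obtain ⟨b, hb⟩ := hB0
    refine le_trans (add_le_add (measure_mono (subset_insert a K)) (measure_mono (subset_insert b L)))
      (bm_compact (hKc.insert a) (hLc.insert b) (by simp) (by simp) ?_)
    intro x hx y hy
    exact h x ((insert_subset ha hK) hx) y ((insert_subset hb hL) hy)
  have k2 : ∀ L ⊆ B, IsCompact L → volume A + volume L ≤ 2 * volume M := by
    intro L hL hLc
    have : volume A ≤ 2 * volume M - volume L := by
      rw [hA.measure_eq_iSup_isCompact]
      refine iSup₂_le fun K hK => iSup_le fun hKc => ?_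
      exact ENNReal.le_sub_of_add_le_right hLc.measure_lt_top.ne (key K hK hKc L hL hLc)
    calc _ ≤ 2 * volume M - volume L + volume L := by gcongr
      _ = _ := tsub_add_cancel_of_le (le_trans (by simp) (key ∅ (by simp) (by simp) L hL hLc))
  rw [hB.measure_eq_iSup_isCompact]
  by_cases hAt : volume A = ∞
  · have := k2 ∅ (by simp) (by simp)
    rw [hAt] at this ⊢
    simp at this ⊢; simp [this]
  · have : (⨆ K, ⨆ (_ : K ⊆ B), ⨆ (_ : IsCompact K), volume K) ≤ 2 * volume M - volume A := by
      refine iSup₂_le fun K hK => iSup_le fun hKc => ?_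
      exact ENNReal.le_sub_of_add_le_left hAt (k2 K hK hKc)
    calc _ ≤ volume A + (2 * volume M - volume A) := by gcongr
      _ = _ := add_tsub_cancel_of_le (le_trans (by simp) (k2 ∅ (by simp) (by simp)))

end

section
open Set Filter Topology
open scoped ENNReal

theorem ennreal_amgm {x y z : ℝ≥0∞} (h : x + y ≤ 2 * z) : x * y ≤ z ^ 2 := by
  by_cases hz : z = ∞
  · simp [hz]
  have hx : x ≠ ∞ := by
    intro hx; rw [hx] at h; simp at h; exact (ENNReal.mul_lt_top (by simp) (lt_top_iff_ne_top.2 hz)).ne h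
  have hy : y ≠ ∞ := by
    intro hx; rw [hx] at h; simp at h; exact (ENNReal.mul_lt_top (by simp) (lt_top_iff_ne_top.2 hz)).ne h
  lift x to NNReal using hx
  lift y to NNReal using hy
  lift z to NNReal using hz
  norm_cast at *
  have h' : (x:ℝ) + y ≤ 2 * z := by exact_mod_cast h
  have : (x:ℝ) * y ≤ z ^ 2 := by
    nlinarith [sq_nonneg ((x:ℝ) - y), x.2, y.2, z.2, (show (0:ℝ) ≤ x + y by positivity)]
  exact_mod_cast this

theorem pl_one_real {F G H : ℝ → ℝ} (hF : Measurable F) (hG : Measurable G) (hH : Measurable H)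
    (F0 : ∀ x, 0 ≤ F x) (G0 : ∀ x, 0 ≤ G x) (H0 : ∀ x, 0 ≤ H x)
    (Fb : BddAbove (range F)) (Gb : BddAbove (range G))
    (h : ∀ x y, F x * G y ≤ H ((x + y) / 2) ^ 2) :
    (∫⁻ x, ENNReal.ofReal (F x)) * (∫⁻ x, ENNReal.ofReal (G x)) ≤ (∫⁻ x, ENNReal.ofReal (H x)) ^ 2 := by
  set a := sSup (range F) with ha
  set b := sSup (range G) with hb
  have Fa : ∀ x, F x ≤ a := fun x => le_csSup Fb (mem_range_self x)
  have Gb' : ∀ x, G x ≤ b := fun x => le_csSup Gb (mem_range_self x)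
  have a0 : 0 ≤ a := (F0 0).trans (Fa 0)
  have b0 : 0 ≤ b := (G0 0).trans (Gb' 0)
  rcases a0.eq_or_lt with ha0 | ha0
  · have : ∀ x, F x = 0 := fun x => le_antisymm (by rw [ha0]; exact Fa x) (F0 x)
    simp [this]
  rcases b0.eq_or_lt with hb0 | hb0
  · have : ∀ x, G x = 0 := fun x => le_antisymm (by rw [hb0]; exact Gb' x) (G0 x)
    simp [this]
  set c := √(a * b) with hc
  have hc0 : 0 < c := Real.sqrt_pos.2 (by positivity)
  have hc2 : c ^ 2 = a * b := Real.sq_sqrt (by positivity)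
  have lay : ∀ {K : ℝ → ℝ} (hK : Measurable K) (K0 : ∀ x, 0 ≤ K x) {k : ℝ} (hk : 0 < k),
      ∫⁻ x, ENNReal.ofReal (K x) = ENNReal.ofReal k * ∫⁻ t in Ioi 0, volume {x | t < K x / k} := by
    intro K hK K0 k hk
    rw [← lintegral_eq_lintegral_meas_lt volume
      (Eventually.of_forall fun x => div_nonneg (K0 x) hk.le) (by fun_prop),
      ← lintegral_const_mul _ (by fun_prop)]
    congr 1; ext x
    rw [← ENNReal.ofReal_mul hk.le]; congr 1; field_simp
  rw [lay hF F0 ha0, lay hG G0 hb0, lay hH H0 hc0]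
  set X := ∫⁻ t in Ioi (0:ℝ), volume {x | t < F x / a}
  set Y := ∫⁻ t in Ioi (0:ℝ), volume {x | t < G x / b}
  set Z := ∫⁻ t in Ioi (0:ℝ), volume {x | t < H x / c}
  have key : X + Y ≤ 2 * Z := by
    rw [← lintegral_const_mul' _ _ (by simp)]
    have mX : Measurable fun t => volume {x | t < F x / a} := by
      refine Antitone.measurable fun s t hst => measure_mono fun x hx => lt_of_le_of_lt hst hx
    rw [← lintegral_add_left mX]
    refine setLIntegral_mono' measurableSet_Ioi fun t ht => ?_
    rcases lt_or_ge t 1 with ht1 | ht1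
    · refine bm_one (measurableSet_lt measurable_const (by fun_prop))
        (measurableSet_lt measurable_const (by fun_prop)) ?_ ?_ ?_
      · obtain ⟨_, ⟨x, rfl⟩, hx⟩ := exists_lt_of_lt_csSup (range_nonempty F)
          (show t * a < sSup (range F) by rw [← ha]; nlinarith)
        exact ⟨x, by simpa using (lt_div_iff₀ ha0).2 hx⟩
      · obtain ⟨_, ⟨x, rfl⟩, hx⟩ := exists_lt_of_lt_csSup (range_nonempty G)
          (show t * b < sSup (range G) by rw [← hb]; nlinarith)
        exact ⟨x, by simpa using (lt_div_iff₀ hb0).2 hx⟩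
      · intro x hx y hy
        simp only [mem_ofPred_eq] at *
        rw [lt_div_iff₀ ha0] at hx
        rw [lt_div_iff₀ hb0] at hy
        rw [lt_div_iff₀ hc0]
        have ht0 : 0 < t := ht
        refine lt_of_pow_lt_pow_left₀ 2 (H0 _) (lt_of_lt_of_le ?_ (h x y))
        rw [mul_pow, hc2]
        calc t ^ 2 * (a * b) = (t * a) * (t * b) := by ring
          _ < F x * G y := mul_lt_mul'' hx hy (by positivity) (by positivity)
    · have e1 : {x | t < F x / a} = ∅ := by
        ext x; simp; rw [div_le_iff₀ ha0]; nlinarith [Fa x]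
      have e2 : {x | t < G x / b} = ∅ := by
        ext x; simp; rw [div_le_iff₀ hb0]; nlinarith [Gb' x]
      simp [e1, e2]
  calc _ = ENNReal.ofReal c ^ 2 * (X * Y) := by
        rw [← ENNReal.ofReal_pow hc0.le, hc2, ENNReal.ofReal_mul a0]; ring
    _ ≤ ENNReal.ofReal c ^ 2 * Z ^ 2 := by gcongr; exact ennreal_amgm key
    _ = _ := by ring

/-- The (midpoint) Prékopa–Leindler property of a measured vector space. -/
def PLSpace (X : Type) [AddCommGroup X] [Module ℝ X] [MeasureSpace X] : Prop :=
  ∀ f g h : X → ℝ≥0∞, Measurable f → Measurable g → Measurable h →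
    (∀ x y, f x * g y ≤ h ((1/2 : ℝ) • (x + y)) ^ 2) →
    (∫⁻ x, f x) * (∫⁻ x, g x) ≤ (∫⁻ x, h x) ^ 2

theorem pl_real : PLSpace ℝ := by
  intro f g h hf hg hh H
  have sup : ∀ {f : ℝ → ℝ≥0∞}, Measurable f → ∫⁻ x, f x = ⨆ N : ℕ, ∫⁻ x, min (f x) N := by
    intro f hf
    rw [← lintegral_iSup (fun N => by fun_prop)
      (fun N M hNM x => by dsimp; gcongr)]
    congr 1; ext x
    have := inf_iSup_eq (f x) (fun N : ℕ => (N : ℝ≥0∞))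
    rw [ENNReal.iSup_natCast, inf_top_eq] at this
    exact this
  have fin : ∀ N M : ℕ, (∫⁻ x, min (f x) N) * (∫⁻ x, min (g x) M) ≤ (∫⁻ x, h x) ^ 2 := by
    have fin1 : ∀ N : ℕ, (∫⁻ x, min (f x) N) * (∫⁻ x, min (g x) N) ≤ (∫⁻ x, h x) ^ 2 := by
      intro N
      have ne : ∀ (f : ℝ → ℝ≥0∞) x, min (f x) N ≠ ∞ := fun f x => ne_top_of_le_ne_top (by simp) (min_le_right _ _)
      have := @pl_one_real (fun x => (min (f x) N).toReal) (fun x => (min (g x) N).toReal)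
        (fun x => (min (h x) N).toReal) (by fun_prop) (by fun_prop) (by fun_prop)
        (fun _ => by positivity) (fun _ => by positivity) (fun _ => by positivity)
        ⟨N, by rintro _ ⟨x, rfl⟩; simpa using ENNReal.toReal_mono (by simp) (min_le_right (f x) N)⟩
        ⟨N, by rintro _ ⟨x, rfl⟩; simpa using ENNReal.toReal_mono (by simp) (min_le_right (g x) N)⟩
        (by
          intro x y
          rw [← ENNReal.toReal_mul, ← ENNReal.toReal_pow]
          refine ENNReal.toReal_mono (ENNReal.pow_ne_top (ne _ _)) ?_
          rcases le_total (h ((x+y)/2)) N with h1 | h1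
          · rw [min_eq_left h1]
            refine le_trans ?_ (le_trans (H x y) (le_of_eq ?_))
            · gcongr <;> exact min_le_left _ _
            · congr 2; simp; ring
          · rw [min_eq_right h1, sq]
            gcongr <;> exact min_le_right _ _)
      simp only [ENNReal.ofReal_toReal (ne _ _)] at this
      refine this.trans ?_
      gcongr; exact min_le_left _ _
    intro N M
    refine le_trans ?_ (fin1 (max N M))
    gcongr <;> simp
  rw [sup hf, sup hg, ENNReal.iSup_mul]
  refine iSup_le fun N => ?_
  rw [ENNReal.mul_iSup]
  exact iSup_le fun M => fin N M

theorem pl_prod {X Y : Type} [AddCommGroup X] [Module ℝ X] [MeasureSpace X] [AddCommGroup Y] [Module ℝ Y] [MeasureSpace Y]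
    [SFinite (volume : Measure X)] [SFinite (volume : Measure Y)]
    (hX : PLSpace X) (hY : PLSpace Y) : PLSpace (X × Y) := by
  intro f g h hf hg hh H
  rw [Measure.volume_eq_prod, lintegral_prod _ hf.aemeasurable, lintegral_prod _ hg.aemeasurable,
    lintegral_prod _ hh.aemeasurable]
  refine hX _ _ _ hf.lintegral_prod_right' hg.lintegral_prod_right' hh.lintegral_prod_right' ?_
  intro x y
  refine hY _ _ _ (by fun_prop) (by fun_prop) (by fun_prop) ?_
  intro z w
  exact H (x, z) (y, w)

theorem pl_transfer {X Y : Type} [AddCommGroup X] [Module ℝ X] [MeasureSpace X] [AddCommGroup Y] [Module ℝ Y] [MeasureSpace Y]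
    (hX : PLSpace X) (L : X →ₗ[ℝ] Y) (hL : MeasurePreserving L) : PLSpace Y := by
  intro f g h hf hg hh H
  rw [← hL.lintegral_comp hf, ← hL.lintegral_comp hg, ← hL.lintegral_comp hh]
  refine hX _ _ _ (hf.comp hL.measurable) (hg.comp hL.measurable) (hh.comp hL.measurable) ?_
  intro x y
  have := H (L x) (L y)
  simpa using this

theorem pl_pi (n : ℕ) : PLSpace (Fin n → ℝ) := by
  induction n with
  | zero =>
    intro f g h hf hg hh H
    simp only [lintegral_unique]
    have := H default default
    rw [Subsingleton.elim ((1/2 : ℝ) • (default + default)) (default : Fin 0 → ℝ)] at this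
    have hv : (volume : Measure (Fin 0 → ℝ)) univ = 1 := by simp [volume_pi]
    rw [hv, mul_one, mul_one, mul_one]; convert this
  | succ n ih =>
    let L : (ℝ × (Fin n → ℝ)) →ₗ[ℝ] (Fin (n+1) → ℝ) :=
      { toFun := fun p => Fin.cons p.1 p.2
        map_add' := by intro x y; ext i; refine Fin.cases ?_ (fun i => ?_) i <;> simp
        map_smul' := by intro c x; ext i; refine Fin.cases ?_ (fun i => ?_) i <;> simp }
    refine pl_transfer (pl_prod pl_real ih) L ?_
    have := (volume_preserving_piFinSuccAbove (fun _ : Fin (n + 1) => ℝ) 0).symm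
    convert! this using 1
    ext p i
    refine Fin.cases ?_ (fun i => ?_) i <;> simp [L, MeasurableEquiv.piFinSuccAbove]
end

section
open Set Filter Topology
open scoped ENNReal

theorem ae_ne_of_linear {Y : Type*} [NormedAddCommGroup Y] [NormedSpace ℝ Y] [FiniteDimensional ℝ Y]
    [MeasurableSpace Y] [BorelSpace Y] (μ : Measure Y) [μ.IsAddHaarMeasure]
    (a : Y →L[ℝ] ℝ) (b : ℝ) (h : a ≠ 0 ∨ b ≠ 0) :
    ∀ᵐ y ∂μ, a y ≠ b := by
  by_cases ha : a = 0
  · refine Eventually.of_forall fun y => ?_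
    simp only [ha, ne_eq, not_true, false_or] at h
    simpa [ha] using Ne.symm h
  · obtain ⟨v, hv⟩ : ∃ v, a v ≠ 0 := by
      by_contra! hh; exact ha (by ext v; simpa using hh v)
    have h0 := Measure.addHaar_affineSubspace μ
      (AffineSubspace.mk' ((b / a v) • v) (LinearMap.ker (a : Y →ₗ[ℝ] ℝ))) (by
        intro htop
        have : (b / a v) • v + v ∈ AffineSubspace.mk' ((b / a v) • v) (LinearMap.ker (a : Y →ₗ[ℝ] ℝ)) := by
          rw [htop]; trivial
        rw [AffineSubspace.mem_mk'] at this
        simp at this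
        exact hv this)
    rw [ae_iff]
    refine measure_mono_null (fun y hy => ?_) h0
    simp only [ne_eq, not_not, mem_ofPred_eq] at hy
    simp only [SetLike.mem_coe, AffineSubspace.mem_mk', LinearMap.mem_ker, vsub_eq_sub]
    simp [hy, div_mul_cancel₀ b hv]

theorem eventually_le_iff_of_ne {α : Type*} {F : Filter α} {f g : α → ℝ} {a b : ℝ}
    (hf : Tendsto f F (𝓝 a)) (hg : Tendsto g F (𝓝 b)) (h : a ≠ b) :
    ∀ᶠ x in F, (f x ≤ g x ↔ a ≤ b) ∧ (f x < g x ↔ a < b) := by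
  rcases lt_or_gt_of_ne h with h | h
  · filter_upwards [hf.eventually_lt hg h] with x hx
    exact ⟨⟨fun _ => h.le, fun _ => hx.le⟩, ⟨fun _ => h, fun _ => hx⟩⟩
  · filter_upwards [hg.eventually_lt hf h] with x hx
    exact ⟨⟨fun h1 => absurd h1 (not_le.2 hx), fun h1 => absurd h1 (not_le.2 h)⟩,
      ⟨fun h1 => absurd h1 (not_lt.2 hx.le), fun h1 => absurd h1 (not_lt.2 h.le)⟩⟩

theorem indicator_congr_mem {X Y M : Type*} [Zero M] {s : Set X} {t : Set Y} {x : X} {y : Y} {c : M} (h : x ∈ s ↔ y ∈ t) :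
    s.indicator (fun _ => c) x = t.indicator (fun _ => c) y := by
  by_cases hx : x ∈ s
  · rw [indicator_of_mem hx, indicator_of_mem (h.1 hx)]
  · rw [indicator_of_notMem hx, indicator_of_notMem (fun hy => hx (h.2 hy))]

def slabX {X ι : Type*} [TopologicalSpace X] [AddCommGroup X] [Module ℝ X]
    (φ : ι → (X →L[ℝ] ℝ)) (l h : ι → ℝ) : Set X := {p | ∀ j, l j ≤ φ j p ∧ φ j p ≤ h j}

def Ssec {ι : Type*} {n : ℕ} (φ : ι → ((ℝ × (Fin n → ℝ)) →L[ℝ] ℝ)) (i : ι) (l h : ι → ℝ) (r : ℝ) :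
    Set (Fin n → ℝ) := {y | ∀ j, j ≠ i → l j ≤ φ j (r, y) ∧ φ j (r, y) ≤ h j}

theorem slabX_closed {X ι : Type*} [TopologicalSpace X] [AddCommGroup X] [Module ℝ X]
    (φ : ι → (X →L[ℝ] ℝ)) (l h : ι → ℝ) : IsClosed (slabX φ l h) := by
  have : slabX φ l h = ⋂ j, {p | l j ≤ φ j p ∧ φ j p ≤ h j} := by ext; simp [slabX]
  rw [this]
  exact isClosed_iInter fun j => (isClosed_le continuous_const (φ j).continuous).inter
    (isClosed_le (φ j).continuous continuous_const)

theorem Ssec_closed {ι : Type*} {n : ℕ} (φ : ι → ((ℝ × (Fin n → ℝ)) →L[ℝ] ℝ)) (i : ι) (l h : ι → ℝ) (r : ℝ) :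
    IsClosed (Ssec φ i l h r) := by
  have : Ssec φ i l h r = ⋂ j, ⋂ (_ : j ≠ i), {y | l j ≤ φ j (r, y) ∧ φ j (r, y) ≤ h j} := by
    ext; simp [Ssec]
  rw [this]
  exact isClosed_iInter fun j => isClosed_iInter fun _ => by
    have hc : Continuous fun y : Fin n → ℝ => φ j (r, y) := by fun_prop
    exact (isClosed_le continuous_const hc).inter (isClosed_le hc continuous_const)

section
variable {ι : Type*} [Fintype ι] {n : ℕ} (φ : ι → ((ℝ × (Fin n → ℝ)) →L[ℝ] ℝ)) (i : ι)
  (hi : ∀ p, φ i p = p.1)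
  (hbd : ∀ l h, Bornology.IsBounded (slabX φ l h))

include hi hbd in
theorem Ssec_bounded (l₀ h₀ : ι → ℝ) (r₀ : ℝ) : ∃ R : ℝ, ∀ᶠ p : (ι → ℝ) × (ι → ℝ) × ℝ in 𝓝 (l₀, h₀, r₀),
    Ssec φ i p.1 p.2.1 p.2.2 ⊆ Metric.closedBall 0 R := by
  classical
  obtain ⟨R, hR⟩ := (hbd (Function.update (fun j => l₀ j - 1) i (r₀ - 1))
    (Function.update (fun j => h₀ j + 1) i (r₀ + 1))).subset_closedBall 0
  refine ⟨R, ?_⟩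
  have h1 : ∀ᶠ p : (ι → ℝ) × (ι → ℝ) × ℝ in 𝓝 (l₀, h₀, r₀), ∀ j, l₀ j - 1 < p.1 j :=
    eventually_all.2 fun j => Tendsto.eventually_const_lt (by simp) (Continuous.tendsto' (by fun_prop) _ _ rfl)
  have h2 : ∀ᶠ p : (ι → ℝ) × (ι → ℝ) × ℝ in 𝓝 (l₀, h₀, r₀), ∀ j, p.2.1 j < h₀ j + 1 :=
    eventually_all.2 fun j => Tendsto.eventually_lt_const (by simp) (Continuous.tendsto' (by fun_prop) _ _ rfl)
  have h3 : ∀ᶠ p : (ι → ℝ) × (ι → ℝ) × ℝ in 𝓝 (l₀, h₀, r₀), r₀ - 1 < p.2.2 :=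
    Tendsto.eventually_const_lt (by simp) (Continuous.tendsto' (by fun_prop) _ _ rfl)
  have h4 : ∀ᶠ p : (ι → ℝ) × (ι → ℝ) × ℝ in 𝓝 (l₀, h₀, r₀), p.2.2 < r₀ + 1 :=
    Tendsto.eventually_lt_const (by simp) (Continuous.tendsto' (by fun_prop) _ _ rfl)
  filter_upwards [h1, h2, h3, h4] with p h1 h2 h3 h4 y hy
  have : ((p.2.2, y) : ℝ × (Fin n → ℝ)) ∈ Metric.closedBall 0 R := by
    refine hR fun j => ?_
    by_cases hj : j = i
    · subst hj; simp [hi, h3.le, h4.le]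
    · have := hy j hj
      simp only [Function.update_of_ne hj]
      exact ⟨(h1 j).le.trans this.1, this.2.trans (h2 j).le⟩
  rw [mem_closedBall_zero_iff] at this ⊢
  exact (norm_snd_le _).trans this

include hi hbd in
theorem Asec_continuous (hpar : ∀ j, j ≠ i → ∃ y, φ j (0, y) ≠ 0) :
    Continuous fun p : (ι → ℝ) × (ι → ℝ) × ℝ => volume.real (Ssec φ i p.1 p.2.1 p.2.2) := by
  rw [continuous_iff_continuousAt]
  rintro ⟨l₀, h₀, r₀⟩
  obtain ⟨R, hR⟩ := Ssec_bounded φ i hi hbd l₀ h₀ r₀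
  have hm : ∀ p : (ι → ℝ) × (ι → ℝ) × ℝ, MeasurableSet (Ssec φ i p.1 p.2.1 p.2.2) :=
    fun p => (Ssec_closed φ i _ _ _).measurableSet
  have e : ∀ p : (ι → ℝ) × (ι → ℝ) × ℝ, volume.real (Ssec φ i p.1 p.2.1 p.2.2) =
      ∫ y, (Ssec φ i p.1 p.2.1 p.2.2).indicator (fun _ => (1:ℝ)) y := by
    intro p; rw [integral_indicator (hm p)]; simp
  simp only [e]
  show Tendsto _ (𝓝 (l₀, h₀, r₀)) (𝓝 _)
  refine tendsto_integral_filter_of_dominated_convergence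
    ((Metric.closedBall 0 R).indicator fun _ => (1:ℝ)) ?_ ?_ ?_ ?_
  · exact Eventually.of_forall fun p => (measurable_const.indicator (hm p)).aestronglyMeasurable
  · filter_upwards [hR] with p hp
    refine Eventually.of_forall fun y => ?_
    by_cases hy : y ∈ Ssec φ i p.1 p.2.1 p.2.2
    · rw [indicator_of_mem hy, indicator_of_mem (hp hy)]; simp
    · rw [indicator_of_notMem hy]; simp; exact indicator_nonneg (by simp) _
  · exact (integrable_indicator_iff Metric.isClosed_closedBall.measurableSet).2
      (by simpa using (Metric.isBounded_closedBall.measure_lt_top))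
  · have hae : ∀ᵐ y : Fin n → ℝ, ∀ j, j ≠ i → φ j (r₀, y) ≠ l₀ j ∧ φ j (r₀, y) ≠ h₀ j := by
      rw [ae_all_iff]; intro j
      by_cases hj : j = i
      · simp [hj]
      obtain ⟨y₁, hy₁⟩ := hpar j hj
      have hne : (φ j).comp (ContinuousLinearMap.inr ℝ ℝ (Fin n → ℝ)) ≠ 0 := by
        intro h0; exact hy₁ (by simpa using congrArg (fun f => f y₁) h0)
      have h1 := ae_ne_of_linear volume _ (l₀ j - φ j (r₀, 0)) (Or.inl hne)
      have h2 := ae_ne_of_linear volume _ (h₀ j - φ j (r₀, 0)) (Or.inl hne)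
      filter_upwards [h1, h2] with y h1 h2 _
      have : φ j (r₀, y) = φ j (r₀, 0) + φ j (0, y) := by rw [← map_add]; simp
      simp at h1 h2
      exact ⟨fun h => h1 (by linarith), fun h => h2 (by linarith)⟩
    filter_upwards [hae] with y hy
    have : ∀ᶠ p : (ι → ℝ) × (ι → ℝ) × ℝ in 𝓝 (l₀, h₀, r₀),
        ∀ j, j ≠ i → ((p.1 j ≤ φ j (p.2.2, y) ↔ l₀ j ≤ φ j (r₀, y)) ∧
          (φ j (p.2.2, y) ≤ p.2.1 j ↔ φ j (r₀, y) ≤ h₀ j)) := by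
      rw [eventually_all]; intro j
      by_cases hj : j = i
      · simp [hj]
      have c1 : Tendsto (fun p : (ι → ℝ) × (ι → ℝ) × ℝ => p.1 j) (𝓝 (l₀, h₀, r₀)) (𝓝 (l₀ j)) :=
        Continuous.tendsto' (by fun_prop) _ _ rfl
      have c2 : Tendsto (fun p : (ι → ℝ) × (ι → ℝ) × ℝ => p.2.1 j) (𝓝 (l₀, h₀, r₀)) (𝓝 (h₀ j)) :=
        Continuous.tendsto' (by fun_prop) _ _ rfl
      have c3 : Tendsto (fun p : (ι → ℝ) × (ι → ℝ) × ℝ => φ j (p.2.2, y)) (𝓝 (l₀, h₀, r₀)) (𝓝 (φ j (r₀, y))) :=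
        Continuous.tendsto' (by fun_prop) _ _ rfl
      filter_upwards [eventually_le_iff_of_ne c1 c3 (hy j hj).1.symm, eventually_le_iff_of_ne c3 c2 (hy j hj).2]
        with p h1 h2 _
      exact ⟨h1.1, h2.1⟩
    refine tendsto_const_nhds.congr' ?_
    filter_upwards [this] with p hp
    have : y ∈ Ssec φ i p.1 p.2.1 p.2.2 ↔ y ∈ Ssec φ i l₀ h₀ r₀ := by
      refine forall_congr' fun j => forall_congr' fun hj => ?_
      rw [(hp j hj).1, (hp j hj).2]
    exact (indicator_congr_mem this).symm

include hi hbd in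
theorem slabX_fubini (l h : ι → ℝ) (hlh : l i ≤ h i) :
    volume.real (slabX φ l h) = ∫ r in (l i)..(h i), volume.real (Ssec φ i l h r) := by
  have hm : MeasurableSet (slabX φ l h) := (slabX_closed φ l h).measurableSet
  have e : volume.real (slabX φ l h) = ∫ p, (slabX φ l h).indicator (fun _ => (1:ℝ)) p := by
    rw [integral_indicator hm]; simp
  rw [e, Measure.volume_eq_prod, integral_prod]
  · rw [intervalIntegral.integral_of_le hlh, ← integral_Icc_eq_integral_Ioc,
      ← integral_indicator measurableSet_Icc]
    congr 1; ext r
    by_cases hr : r ∈ Icc (l i) (h i)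
    · rw [indicator_of_mem hr]
      rw [show (fun y => (slabX φ l h).indicator (fun _ => (1:ℝ)) (r, y)) =
        (Ssec φ i l h r).indicator (fun _ => (1:ℝ)) from ?_]
      · rw [integral_indicator (Ssec_closed φ i _ _ _).measurableSet]; simp
      · ext y
        have : (r, y) ∈ slabX φ l h ↔ y ∈ Ssec φ i l h r := by
          refine ⟨fun H j _ => H j, fun H j => ?_⟩
          by_cases hj : j = i
          · subst hj; simpa [hi] using hr
          · exact H j hj
        exact indicator_congr_mem this
    · rw [indicator_of_notMem hr]
      rw [show (fun y => (slabX φ l h).indicator (fun _ => (1:ℝ)) (r, y)) = fun _ => 0 from ?_]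
      · simp
      · ext y
        refine indicator_of_notMem (fun H => hr ?_) _
        have := H i
        simpa [hi] using this
  · rw [← Measure.volume_eq_prod]
    exact (integrable_indicator_iff hm).2 (by simpa using ((hbd l h).measure_lt_top))
end
end

section
open Set Filter Topology
open scoped ENNReal

theorem symm_of_quantile {f : ℝ → ℝ} (hf : Continuous f) {l h : ℝ}
    (pos : ∀ r ∈ Ioo l h, 0 < f r)
    (H : ∀ r ∈ Ioo l h, ∀ ρ ∈ Ioo l h,
      (∫ x in l..r, f x) + (∫ x in l..ρ, f x) = ∫ x in l..h, f x → f r = f ρ) :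
    ∀ r ∈ Ioo l h, f r = f (l + h - r) := by
  intro r₀ hr₀
  have hlh : l < h := hr₀.1.trans hr₀.2
  set F : ℝ → ℝ := fun r => ∫ x in l..r, f x with hF
  set v := F h with hv
  have hd : ∀ r, HasDerivAt F (f r) r := fun r =>
    intervalIntegral.integral_hasDerivAt_right (hf.intervalIntegrable _ _)
      (hf.stronglyMeasurableAtFilter _ _) hf.continuousAt
  have hFc : Continuous F := continuous_iff_continuousAt.2 fun r => (hd r).continuousAt
  have hF0 : F l = 0 := by simp [hF]
  have hmono : StrictMonoOn F (Icc l h) := by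
    refine strictMonoOn_of_deriv_pos (convex_Icc l h) hFc.continuousOn ?_
    intro x hx
    rw [interior_Icc] at hx
    rw [(hd x).deriv]; exact pos x hx
  have hmaps : ∀ r ∈ Ioo l h, F r ∈ Ioo 0 v := fun r hr =>
    ⟨by rw [← hF0]; exact hmono (left_mem_Icc.2 hlh.le) (Ioo_subset_Icc_self hr) hr.1,
     hmono (Ioo_subset_Icc_self hr) (right_mem_Icc.2 hlh.le) hr.2⟩
  have hsurj : ∀ τ ∈ Ioo 0 v, ∃ r ∈ Ioo l h, F r = τ := by
    intro τ hτ
    have := intermediate_value_Ioo hlh.le hFc.continuousOn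
    rw [hF0] at this
    exact this hτ
  choose! q hq hFq using hsurj
  have hqF : ∀ r ∈ Ioo l h, q (F r) = r := fun r hr =>
    hmono.injOn (Ioo_subset_Icc_self (hq _ (hmaps r hr))) (Ioo_subset_Icc_self hr) (hFq _ (hmaps r hr))
  have qmono : StrictMonoOn q (Ioo 0 v) := by
    intro a ha b hb hab
    rw [← hFq a ha, ← hFq b hb] at hab
    exact (hmono.lt_iff_lt (Ioo_subset_Icc_self (hq _ ha)) (Ioo_subset_Icc_self (hq _ hb))).1 hab
  have qimg : q '' Ioo 0 v = Ioo l h := by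
    ext r; constructor
    · rintro ⟨τ, hτ, rfl⟩; exact hq τ hτ
    · intro hr; exact ⟨F r, hmaps r hr, hqF r hr⟩
  have qc : ∀ τ ∈ Ioo 0 v, ContinuousAt q τ := fun τ hτ =>
    qmono.continuousAt_of_image_mem_nhds (Ioo_mem_nhds hτ.1 hτ.2)
      (by rw [qimg]; exact Ioo_mem_nhds (hq τ hτ).1 (hq τ hτ).2)
  have qd : ∀ τ ∈ Ioo 0 v, HasDerivAt q (f (q τ))⁻¹ τ := fun τ hτ =>
    HasDerivAt.of_local_left_inverse (qc τ hτ) (hd _) (pos _ (hq τ hτ)).ne'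
      (by filter_upwards [Ioo_mem_nhds hτ.1 hτ.2] with y hy using hFq y hy)
  have hrefl : ∀ τ ∈ Ioo 0 v, v - τ ∈ Ioo 0 v := fun τ hτ => ⟨by linarith [hτ.2], by linarith [hτ.1]⟩
  have Dd : ∀ τ ∈ Ioo 0 v, HasDerivAt (fun τ => q τ + q (v - τ)) 0 τ := by
    intro τ hτ
    have h1 := (qd τ hτ).add ((qd (v - τ) (hrefl τ hτ)).comp_const_sub v τ)
    convert! h1 using 1
    have := H _ (hq τ hτ) _ (hq _ (hrefl τ hτ)) (by
      change F _ + F _ = v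
      rw [hFq _ hτ, hFq _ (hrefl τ hτ)]; ring)
    rw [this]; ring
  have const : ∀ τ ∈ Ioo 0 v, ∀ τ' ∈ Ioo 0 v, q τ + q (v - τ) = q τ' + q (v - τ') := by
    intro τ hτ τ' hτ'
    exact (convex_Ioo 0 v).is_const_of_fderivWithin_eq_zero (𝕜 := ℝ) (f := fun τ => q τ + q (v - τ))
      (fun x hx => (Dd x hx).differentiableAt.differentiableWithinAt)
      (fun x hx => by
        rw [fderivWithin_of_isOpen isOpen_Ioo hx]
        have := (Dd x hx).hasFDerivAt.fderiv
        rw [this]; ext; simp) hτ hτ'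
  set C := q (F r₀) + q (v - F r₀) with hC
  have hCr : ∀ r ∈ Ioo l h, C - r ∈ Ioo l h ∧ F (C - r) = v - F r := by
    intro r hr
    have e := const _ (hmaps r hr) _ (hmaps r₀ hr₀)
    rw [← hC, hqF r hr] at e
    have : C - r = q (v - F r) := by linarith
    rw [this]
    exact ⟨hq _ (hrefl _ (hmaps r hr)), hFq _ (hrefl _ (hmaps r hr))⟩
  have c1 : C - l ≤ h := by
    by_contra! hh
    have := (hCr (min ((l + (C - h)) / 2) ((l+h)/2)) ⟨by simp; constructor <;> linarith, by
      refine lt_of_le_of_lt (min_le_right _ _) (by linarith)⟩).1.2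
    have h2 := min_le_left ((l + (C - h)) / 2) ((l+h)/2)
    linarith
  have c2 : l ≤ C - h := by
    by_contra! hh
    have := (hCr (max ((h + (C - l)) / 2) ((l+h)/2)) ⟨by
      refine lt_of_lt_of_le ?_ (le_max_right _ _); linarith, by simp; constructor <;> linarith⟩).1.1
    have h2 := le_max_left ((h + (C - l)) / 2) ((l+h)/2)
    linarith
  have hCe : C = l + h := by linarith
  obtain ⟨h1, h2⟩ := hCr r₀ hr₀
  rw [← hCe]
  refine H _ hr₀ _ h1 ?_
  change F _ + F _ = v
  rw [h2]; ring

section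
variable {ι : Type*} [Fintype ι] [DecidableEq ι]
  (V : (ι → ℝ) → (ι → ℝ) → ℝ) (A : ι → (ι → ℝ) → (ι → ℝ) → ℝ → ℝ)
  (hAc : ∀ i, Continuous fun p : (ι → ℝ) × (ι → ℝ) × ℝ => A i p.1 p.2.1 p.2.2)
  (hVA : ∀ i l h, l i ≤ h i → V l h = ∫ r in (l i)..(h i), A i l h r)
  (hAu : ∀ i l h a b r, A i (Function.update l i a) (Function.update h i b) r = A i l h r)
  (hV0 : ∀ l h, 0 ≤ V l h)
  (hVm : ∀ l h l' h', V l h * V l' h' ≤ V ((1/2 : ℝ) • (l + l')) ((1/2 : ℝ) • (h + h')) ^ 2)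
  (hVneg : ∀ l h, V (-h) (-l) = V l h)
  (l h : ι → ℝ) (hlh : ∀ i, l i < h i) (hv : 0 < V l h)
  (hpos : ∀ i, ∀ r ∈ Ioo (l i) (h i), 0 < A i l h r)
  (heq : ∀ i, A i l h (h i) = A i l h (l i))

include hAc hVA hAu hlh heq in
theorem shift_deriv (c : ι → ℝ) (J : Finset ι) : ∃ Q : ℝ → ℝ, Continuous Q ∧ Q 0 = 0 ∧
    ∀ s : ℝ, V (l + s • (fun j => if j ∈ J then c j else 0)) (h + s • (fun j => if j ∈ J then c j else 0))
      = V l h + s * Q s := by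
  induction J using Finset.induction_on with
  | empty =>
    refine ⟨0, continuous_const, rfl, fun s => ?_⟩
    have : s • (fun j : ι => if j ∈ (∅ : Finset ι) then c j else 0) = 0 := by ext; simp
    rw [this]; simp
  | insert j J hj ih =>
    obtain ⟨Q, hQ, hQ0, hQs⟩ := ih
    set cJ : ι → ℝ := fun j => if j ∈ J then c j else 0 with hcJ
    have hcj : cJ j = 0 := by simp [hcJ, hj]
    let B : ℝ → ℝ → ℝ := fun s x => A j (l + s • cJ) (h + s • cJ) x
    have hB : Continuous fun p : ℝ × ℝ => B p.1 p.2 := by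
      have := (hAc j).comp (show Continuous fun p : ℝ × ℝ => (l + p.1 • cJ, h + p.1 • cJ, p.2) by fun_prop)
      exact this
    have hBs : ∀ s, Continuous (B s) := fun s => hB.comp (by fun_prop : Continuous fun x : ℝ => (s, x))
    refine ⟨fun s => Q s + ((∫ x in (0:ℝ)..(c j), B s (h j + s * x)) - (∫ x in (0:ℝ)..(c j), B s (l j + s * x))), ?_, ?_, ?_⟩
    · refine hQ.add (Continuous.sub ?_ ?_)
      · refine intervalIntegral.continuous_parametric_intervalIntegral_of_continuous' ?_ _ _
        exact hB.comp (by fun_prop : Continuous fun p : ℝ × ℝ => (p.1, h j + p.1 * p.2))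
      · refine intervalIntegral.continuous_parametric_intervalIntegral_of_continuous' ?_ _ _
        exact hB.comp (by fun_prop : Continuous fun p : ℝ × ℝ => (p.1, l j + p.1 * p.2))
    · simp [hQ0, B, heq j]
    · intro s
      have e1 : ∀ k : ι → ℝ, k + s • (fun i => if i ∈ insert j J then c i else 0) =
          Function.update (k + s • cJ) j (k j + s * c j) := by
        intro k; ext i
        by_cases hi : i = j
        · subst hi; simp
        · simp [hi, hcJ]
      rw [e1, e1]
      rw [hVA j _ _ (by simp [(hlh j).le])]
      have hb := hQs s
      rw [hVA j _ _ (by simp [hcj, (hlh j).le])] at hb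
      simp only [hAu, Function.update_self]
      simp only [Pi.add_apply, Pi.smul_apply, hcj, smul_zero, add_zero] at hb
      have s1 := intervalIntegral.smul_integral_comp_add_mul (a := 0) (b := c j) (B s) s (h j)
      have s2 := intervalIntegral.smul_integral_comp_add_mul (a := 0) (b := c j) (B s) s (l j)
      simp only [mul_zero, add_zero, smul_eq_mul] at s1 s2
      have ii : ∀ a b, IntervalIntegrable (B s) volume a b := fun a b => (hBs s).intervalIntegrable a b
      have t1 := intervalIntegral.integral_add_adjacent_intervals (ii (l j) (l j + s * c j)) (ii (l j + s * c j) (h j + s * c j))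
      have t2 := intervalIntegral.integral_add_adjacent_intervals (ii (l j) (h j)) (ii (h j) (h j + s * c j))
      change ∫ x in (l j + s * c j)..(h j + s * c j), B s x = _
      change ∫ x in (l j)..(h j), B s x = _ at hb
      rw [mul_add, mul_sub, s1, s2]
      linarith

include hAc hVA hAu hV0 hVm hlh hv heq in
theorem shift_max (c : ι → ℝ) : V (l + c) (h + c) ≤ V l h := by
  obtain ⟨Q, hQ, hQ0, hQs⟩ := shift_deriv V A hAc hVA hAu l h hlh heq c Finset.univ
  simp only [Finset.mem_univ, if_true] at hQs
  by_contra! hlt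
  set v := V l h
  let g : ℝ → ℝ := fun s => V (l + s • c) (h + s • c)
  have hg : ∀ s, v * g s ≤ g (s / 2) ^ 2 := by
    intro s
    have := hVm l h (l + s • c) (h + s • c)
    convert this using 3
    · ext i; simp; ring
    · ext i; simp; ring
  set κ := Real.log (g 1 / v) with hκ
  have hκ0 : 0 < κ := Real.log_pos (by rw [one_lt_div hv]; simpa [g] using hlt)
  have main : ∀ k : ℕ, 0 < g ((1/2)^k) ∧ (1/2)^k * κ ≤ Real.log (g ((1/2)^k) / v) := by
    intro k
    induction k with
    | zero => simp only [pow_zero, one_mul, hκ, le_refl, and_true]; exact hv.trans (by simpa [g] using hlt)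
    | succ k ih =>
      obtain ⟨p, hp⟩ := ih
      have h1 := hg ((1/2)^k)
      have e : ((1/2 : ℝ)^k) / 2 = (1/2)^(k+1) := by rw [pow_succ]; ring
      rw [e] at h1
      have p1 : 0 < g ((1/2)^(k+1)) := by
        have : 0 ≤ g ((1/2)^(k+1)) := hV0 _ _
        have h3 : 0 < g ((1/2)^(k+1)) ^ 2 := lt_of_lt_of_le (by positivity) h1
        exact lt_of_le_of_ne this (fun h0 => by rw [← h0] at h3; simp at h3)
      refine ⟨p1, ?_⟩
      have h2 : g ((1/2)^k) / v ≤ (g ((1/2)^(k+1)) / v) ^ 2 := by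
        generalize g ((1/2)^k) = a at *
        generalize g ((1/2)^(k+1)) = b at *
        rw [div_pow, div_le_div_iff₀ hv (by positivity)]
        nlinarith
      have h3 := Real.log_le_log (by positivity) h2
      rw [Real.log_pow] at h3
      push_cast at h3
      rw [show (1/2:ℝ)^(k+1) * κ = (1/2)^k * κ / 2 by ring]
      linarith
  have key : ∀ k : ℕ, v * κ ≤ Q ((1/2)^k) := by
    intro k
    obtain ⟨p, hp⟩ := main k
    have h1 := Real.log_le_sub_one_of_pos (show 0 < g ((1/2)^k) / v by positivity)
    have h2 : g ((1/2)^k) = v + (1/2)^k * Q ((1/2)^k) := hQs _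
    have h3 : g ((1/2)^k) / v - 1 = (1/2)^k * (Q ((1/2)^k) / v) := by rw [h2]; field_simp; ring
    have h4 : (1/2 : ℝ)^k * κ ≤ (1/2)^k * (Q ((1/2)^k) / v) := by linarith
    have h5 := le_of_mul_le_mul_left h4 (by positivity)
    rw [le_div_iff₀ hv] at h5
    linarith
  have lim : Tendsto (fun k : ℕ => Q ((1/2)^k)) atTop (𝓝 0) := by
    rw [← hQ0]
    exact (hQ.tendsto 0).comp (tendsto_pow_atTop_nhds_zero_of_lt_one (by norm_num) (by norm_num))
  have := ge_of_tendsto' lim key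
  have : 0 < v * κ := by positivity
  linarith

include hAc hVA hAu hV0 hVm hVneg hlh hv hpos heq in
theorem section_symm (i : ι) : ∀ r ∈ Ioo (l i) (h i), A i l h r = A i l h (l i + h i - r) := by
  have hfc : Continuous (A i l h) := (hAc i).comp (by fun_prop : Continuous fun r : ℝ => (l, h, r))
  set v := V l h with hvdef
  set F : ℝ → ℝ := fun r => ∫ x in (l i)..r, A i l h x with hF
  have hFh : F (h i) = v := (hVA i l h (hlh i).le).symm
  have ii : ∀ a b, IntervalIntegrable (A i l h) volume a b := fun a b => hfc.intervalIntegrable a b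
  have hlo : ∀ r, l i ≤ r → V l (Function.update h i r) = F r := by
    intro r hr
    rw [hVA i _ _ (by simpa using hr)]
    have : ∀ x, A i l (Function.update h i r) x = A i l h x := by
      intro x
      have := hAu i l h (l i) r x
      simpa using this
    simp [this, hF]
  have hup : ∀ r, r ≤ h i → V (Function.update l i r) h = v - F r := by
    intro r hr
    rw [hVA i _ _ (by simpa using hr)]
    have : ∀ x, A i (Function.update l i r) h x = A i l h x := by
      intro x
      have := hAu i l h r (h i) x
      simpa using this
    simp only [this, Function.update_self]
    rw [← hFh, hF]
    dsimp
    rw [intervalIntegral.integral_interval_sub_left (ii _ _) (ii _ _)]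
  set ls : ι → ℝ := (1/2 : ℝ) • (l + -h) with hls
  set hs : ι → ℝ := (1/2 : ℝ) • (h + -l) with hhs
  have hVs : V ls hs ≤ v := by
    have := shift_max V A hAc hVA hAu hV0 hVm l h hlh hv heq (-(1/2 : ℝ) • (l + h))
    convert this using 2
    · ext j; simp [hls]; ring
    · ext j; simp [hhs]; ring
  have hfs : Continuous (A i ls hs) := (hAc i).comp (by fun_prop : Continuous fun r : ℝ => (ls, hs, r))
  set G : ℝ → ℝ := fun m => V ls (Function.update hs i m) with hG
  have low : ∀ r, ∀ ρ, l i ≤ r → ρ ≤ h i → F r * (v - F ρ) ≤ G ((r - ρ)/2) ^ 2 := by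
    intro r ρ hr hρ
    have := hVm l (Function.update h i r) (-h) (-(Function.update l i ρ))
    rw [hVneg, hlo r hr, hup ρ hρ] at this
    convert this using 3
    ext j
    by_cases hj : j = i
    · subst hj; simp; ring
    · simp [hj, hhs]; ring
  have hcut : ∀ r, ∀ ρ, r ∈ Icc (l i) (h i) → ρ ∈ Icc (l i) (h i) →
      V ((1/2 : ℝ) • (Function.update l i r + -Function.update h i ρ)) hs = V ls hs - G ((r - ρ)/2) := by
    intro r ρ hr hρ
    set m := (r - ρ) / 2 with hm
    have e1 : (1/2 : ℝ) • (Function.update l i r + -Function.update h i ρ) = Function.update ls i m := by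
      ext j
      by_cases hj : j = i
      · subst hj; simp [hm]; ring
      · simp [hj, hls]; ring
    rw [e1]
    have m1 : ls i ≤ m := by simp [hls, hm]; linarith [hr.1, hρ.2]
    have m2 : m ≤ hs i := by simp [hhs, hm]; linarith [hr.2, hρ.1]
    rw [hG]; dsimp only
    rw [hVA i ls hs (m1.trans m2), hVA i ls _ (by simpa using m1), hVA i _ hs (by simpa using m2)]
    have a1 : ∀ x, A i ls (Function.update hs i m) x = A i ls hs x := by
      intro x
      have := hAu i ls hs (ls i) m x
      simpa using this
    have a2 : ∀ x, A i (Function.update ls i m) hs x = A i ls hs x := by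
      intro x
      have := hAu i ls hs m (hs i) x
      simpa using this
    simp only [a1, a2, Function.update_self]
    rw [intervalIntegral.integral_interval_sub_left (hfs.intervalIntegrable _ _) (hfs.intervalIntegrable _ _)]
  have upp : ∀ r, ∀ ρ, r ∈ Icc (l i) (h i) → ρ ∈ Icc (l i) (h i) →
      (v - F r) * F ρ ≤ (V ls hs - G ((r - ρ)/2)) ^ 2 := by
    intro r ρ hr hρ
    have := hVm (Function.update l i r) h (-(Function.update h i ρ)) (-l)
    rw [hVneg, hlo ρ hρ.1, hup r hr.2] at this
    rw [← hhs, hcut r ρ hr hρ] at this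
    exact this
  have hd : ∀ r, HasDerivAt F (A i l h r) r := fun r =>
    intervalIntegral.integral_hasDerivAt_right (hfc.intervalIntegrable _ _)
      (hfc.stronglyMeasurableAtFilter _ _) hfc.continuousAt
  refine symm_of_quantile hfc (hpos i) ?_
  intro r hr ρ hρ hsum
  change F r + F ρ = F (h i) at hsum
  rw [hFh] at hsum
  have τpos : 0 < F r := intervalIntegral.intervalIntegral_pos_of_pos_on (ii _ _)
    (fun x hx => hpos i x ⟨hx.1, hx.2.trans hr.2⟩) hr.1
  have τpos' : 0 < F ρ := intervalIntegral.intervalIntegral_pos_of_pos_on (ii _ _)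
    (fun x hx => hpos i x ⟨hx.1, hx.2.trans hρ.2⟩) hρ.1
  have l1 := low r ρ hr.1.le hρ.2.le
  have u1 := upp r ρ (Ioo_subset_Icc_self hr) (Ioo_subset_Icc_self hρ)
  have g0 : 0 ≤ G ((r-ρ)/2) := hV0 _ _
  have g1 : F r ≤ G ((r-ρ)/2) := by
    have : v - F ρ = F r := by linarith
    rw [this] at l1
    exact le_of_not_gt fun hgt => by nlinarith
  have g2 : G ((r-ρ)/2) ≤ F r := by
    by_contra! hgt
    have : G ((r - ρ)/2) ≤ V ls hs := by
      have := hcut r ρ (Ioo_subset_Icc_self hr) (Ioo_subset_Icc_self hρ)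
      have h0 := hV0 ((1/2 : ℝ) • (Function.update l i r + -Function.update h i ρ)) hs
      linarith
    have e1 : v - F r = F ρ := by linarith
    rw [e1] at u1
    nlinarith
  have hG' : G ((r-ρ)/2) = F r := le_antisymm g2 g1
  have hmax : IsLocalMax (fun x => F (r + x) * (v - F (ρ + x))) 0 := by
    have n1 : ∀ᶠ x in 𝓝 (0:ℝ), l i < r + x :=
      Tendsto.eventually_const_lt (show l i < r + 0 by simpa using hr.1) (Continuous.tendsto (by fun_prop) 0)
    have n2 : ∀ᶠ x in 𝓝 (0:ℝ), ρ + x < h i :=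
      Tendsto.eventually_lt_const (show ρ + 0 < h i by simpa using hρ.2) (Continuous.tendsto (by fun_prop) 0)
    filter_upwards [n1, n2] with x h1 h2
    have := low (r + x) (ρ + x) h1.le h2.le
    rw [show (r + x - (ρ + x))/2 = (r - ρ)/2 by ring, hG'] at this
    simp only [add_zero]
    refine this.trans (le_of_eq ?_)
    rw [sq, ← hsum]; ring
  have dd : HasDerivAt (fun x => F (r + x) * (v - F (ρ + x)))
      (A i l h r * (v - F ρ) + F r * (-(A i l h ρ))) 0 := by
    have d1 : HasDerivAt (fun x => F (r + x)) (A i l h r) 0 := by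
      have := hd (r + 0)
      simpa using this.comp_const_add r 0
    have d2 : HasDerivAt (fun x => F (ρ + x)) (A i l h ρ) 0 := by
      have := hd (ρ + 0)
      simpa using this.comp_const_add ρ 0
    have := d1.mul (d2.const_sub v)
    convert! this using 1
    simp
  have z := hmax.hasDerivAt_eq_zero dd
  have : v - F ρ = F r := by linarith
  rw [this] at z
  have : F r * (A i l h r - A i l h ρ) = 0 := by linarith
  rcases mul_eq_zero.1 this with h0 | h0
  · exact absurd h0 τpos.ne'
  · linarith
end
end

section
open Set Filter Topology
open scoped ENNReal

theorem hrep_zero {E : Type*} [NormedAddCommGroup E] [InnerProductSpace ℝ E] [FiniteDimensional ℝ E]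
    (S : Finset E) (h0 : (0 : E) ∈ interior (convexHull ℝ (S : Set E))) :
    ∃ F : Set E, F.Finite ∧ convexHull ℝ (S : Set E) = {x | ∀ u ∈ F, ⟪u, x⟫_ℝ ≤ 1} := by
  classical
  set K := convexHull ℝ (S : Set E) with hK
  set P : Set E := {u | ∀ p ∈ S, ⟪u, p⟫_ℝ ≤ 1} with hP
  have hPK : ∀ u ∈ P, ∀ x ∈ K, ⟪u, x⟫_ℝ ≤ 1 := by
    intro u hu x hx
    have hc : Convex ℝ {x : E | ⟪u, x⟫_ℝ ≤ 1} := by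
      have := (convex_Iic (1:ℝ)).linear_preimage (innerSL ℝ u).toLinearMap
      exact this
    exact convexHull_min (fun p hp => hu p hp) hc hx
  have hPc : Convex ℝ P := by
    have : P = ⋂ p ∈ S, {u | ⟪u, p⟫_ℝ ≤ 1} := by ext; simp [hP]
    rw [this]
    refine convex_iInter₂ fun p _ => ?_
    have := (convex_Iic (1:ℝ)).linear_preimage (innerSL ℝ p).toLinearMap
    have e : {u : E | ⟪u, p⟫_ℝ ≤ 1} = (innerSL ℝ p).toLinearMap ⁻¹' Iic 1 := by
      ext u; simp [real_inner_comm]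
    rw [e]; exact this
  have hPcl : IsClosed P := by
    have : P = ⋂ p ∈ S, {u | ⟪u, p⟫_ℝ ≤ 1} := by ext; simp [hP]
    rw [this]
    exact isClosed_biInter fun p _ => isClosed_le (by fun_prop) continuous_const
  obtain ⟨r, hr, hball⟩ := Metric.mem_nhds_iff.1 (mem_interior_iff_mem_nhds.1 h0)
  have hPb : Bornology.IsBounded P := by
    refine (Metric.isBounded_iff_subset_closedBall 0).2 ⟨2 / r, fun u hu => ?_⟩
    rw [mem_closedBall_zero_iff]
    by_cases hu0 : u = 0
    · subst hu0; simp; positivity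
    have hun : 0 < ‖u‖ := norm_pos_iff.2 hu0
    have := hPK u hu ((r / 2 / ‖u‖) • u) (hball (by
      rw [mem_ball_zero_iff, norm_smul, Real.norm_of_nonneg (by positivity)]
      field_simp; linarith))
    rw [inner_smul_right, real_inner_self_eq_norm_sq] at this
    rw [le_div_iff₀ hr]
    field_simp at this
    linarith
  have hPk : IsCompact P := Metric.isCompact_of_isClosed_isBounded hPcl hPb
  refine ⟨P.extremePoints ℝ, ?_, ?_⟩
  · refine Set.Finite.of_finite_image (f := fun u => S.filter fun p => ⟪u, p⟫_ℝ = 1)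
      ((S.powerset.finite_toSet).subset ?_) ?_
    · rintro _ ⟨u, _, rfl⟩; exact Finset.mem_coe.2 (Finset.mem_powerset.2 (Finset.filter_subset _ _))
    · intro u hu u' hu' heq
      by_contra hne
      set w := u' - u with hw
      have hw0 : w ≠ 0 := sub_ne_zero.2 (Ne.symm hne)
      have tight : ∀ p ∈ S, ⟪u, p⟫_ℝ = 1 → ⟪w, p⟫_ℝ = 0 := by
        intro p hp h1
        have : p ∈ S.filter fun p => ⟪u', p⟫_ℝ = 1 := by
          have := Finset.ext_iff.1 heq p
          exact this.1 (by simp [hp, h1])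
        rw [hw, inner_sub_left, h1, (Finset.mem_filter.1 this).2]; ring
      have ev : ∀ᶠ ε in 𝓝 (0:ℝ), u + ε • w ∈ P := by
        have : ∀ p ∈ S, ∀ᶠ ε in 𝓝 (0:ℝ), ⟪u + ε • w, p⟫_ℝ ≤ 1 := by
          intro p hp
          by_cases h1 : ⟪u, p⟫_ℝ = 1
          · refine Eventually.of_forall fun ε => ?_
            rw [inner_add_left, inner_smul_left, tight p hp h1, h1]; simp
          · have hlt : ⟪u, p⟫_ℝ < 1 := lt_of_le_of_ne (hu.1 p hp) h1
            have : Tendsto (fun ε : ℝ => ⟪u + ε • w, p⟫_ℝ) (𝓝 0) (𝓝 ⟪u, p⟫_ℝ) :=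
              Continuous.tendsto' (by fun_prop) _ _ (by simp)
            exact (this.eventually_lt_const hlt).mono fun _ h => h.le
        exact ((Finset.eventually_all S).2 this)
      obtain ⟨ε, hε, hb⟩ := Metric.eventually_nhds_iff.1 ev
      have m1 := hb (y := ε / 2) (by simp [abs_of_pos hε]; linarith)
      have m2 := hb (y := -(ε / 2)) (by simp [abs_of_pos hε]; linarith)
      have := hu.2 m1 m2 ⟨1/2, 1/2, by norm_num, by norm_num, by norm_num, by module⟩
      have h2 : (ε / 2) • w = 0 := by simpa using this
      rcases smul_eq_zero.1 h2 with h3 | h3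
      · linarith
      · exact hw0 h3
  · ext x
    constructor
    · intro hx u hu
      exact hPK u hu.1 x hx
    · intro hx
      have hx' : ∀ u ∈ P, ⟪u, x⟫_ℝ ≤ 1 := by
        have hcl : IsClosed {u : E | ⟪u, x⟫_ℝ ≤ 1} := isClosed_le (by fun_prop) continuous_const
        have hc : Convex ℝ {u : E | ⟪u, x⟫_ℝ ≤ 1} := by
          have := (convex_Iic (1:ℝ)).linear_preimage (innerSL ℝ x).toLinearMap
          have e : {u : E | ⟪u, x⟫_ℝ ≤ 1} = (innerSL ℝ x).toLinearMap ⁻¹' Iic 1 := by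
            ext u; simp [real_inner_comm]
          rw [e]; exact this
        have := closure_minimal (convexHull_min hx hc) hcl
        rw [closure_convexHull_extremePoints hPk hPc] at this
        exact this
      by_contra hxK
      have hKc : IsClosed K := (S.finite_toSet.isCompact_convexHull ℝ).isClosed
      obtain ⟨f, c, hf, hfx⟩ := geometric_hahn_banach_closed_point (convex_convexHull ℝ _) hKc hxK
      have hc : 0 < c := by simpa using hf 0 (interior_subset h0)
      set v := (InnerProductSpace.toDual ℝ E).symm f with hv
      have hvf : ∀ y, ⟪v, y⟫_ℝ = f y := fun y => by simp [hv]
      have : c⁻¹ • v ∈ P := by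
        intro p hp
        rw [inner_smul_left, hvf]
        have := hf p (subset_convexHull ℝ _ hp)
        simp
        rw [inv_mul_le_iff₀ hc]; linarith
      have := hx' _ this
      rw [inner_smul_left, hvf] at this
      simp at this
      rw [inv_mul_le_iff₀ hc] at this; linarith

theorem half_system {E : Type*} [AddCommGroup E] [DecidableEq E] (D : Finset E) (hD : ∀ d ∈ D, d ≠ -d) :
    ∃ U : Finset E, U ⊆ D ∧ (∀ d ∈ D, d ∈ U ∨ -d ∈ U) ∧ ∀ d ∈ U, -d ∉ U := by
  induction D using Finset.induction_on with
  | empty => exact ⟨∅, by simp⟩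
  | insert a D ha ih =>
    obtain ⟨U, h1, h2, h3⟩ := ih fun d hd => hD d (Finset.mem_insert_of_mem hd)
    by_cases h : a ∈ U ∨ -a ∈ U
    · refine ⟨U, h1.trans (Finset.subset_insert _ _), ?_, h3⟩
      intro d hd
      rcases Finset.mem_insert.1 hd with rfl | hd
      · exact h
      · exact h2 d hd
    · push Not at h
      refine ⟨insert a U, Finset.insert_subset_insert _ h1, ?_, ?_⟩
      · intro d hd
        rcases Finset.mem_insert.1 hd with rfl | hd
        · simp
        · rcases h2 d hd with h | h <;> simp [h]
      · intro d hd hd'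
        rcases Finset.mem_insert.1 hd with rfl | hd1
        · rcases Finset.mem_insert.1 hd' with h4 | h4
          · exact hD d (by simp) h4.symm
          · exact h.2 h4
        · rcases Finset.mem_insert.1 hd' with h4 | h4
          · apply h.2; rw [← h4]; simpa
          · exact h3 d hd1 h4

theorem exists_slab {E : Type*} [NormedAddCommGroup E] [InnerProductSpace ℝ E] [FiniteDimensional ℝ E]
    (S : Finset E) (K : Set E) (hKS : K = convexHull ℝ (S : Set E)) (hne : (interior K).Nonempty) :
    ∃ U : Finset E, (∀ u ∈ U, ‖u‖ = 1) ∧ (∀ u ∈ U, ∀ v ∈ U, u ≠ v → ∀ t : ℝ, u ≠ t • v) ∧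
      (∀ l h : U → ℝ, Bornology.IsBounded {x : E | ∀ j : U, l j ≤ ⟪(j:E), x⟫_ℝ ∧ ⟪(j:E), x⟫_ℝ ≤ h j}) ∧
      ∃ l h : U → ℝ, K = {x : E | ∀ j : U, l j ≤ ⟪(j:E), x⟫_ℝ ∧ ⟪(j:E), x⟫_ℝ ≤ h j} ∧
        (∀ j : U, ∃ x ∈ K, ⟪(j:E), x⟫_ℝ = l j) ∧ (∀ j : U, ∃ x ∈ K, ⟪(j:E), x⟫_ℝ = h j) := by
  classical
  obtain ⟨x0, hx0⟩ := hne
  have hKc : IsCompact K := by rw [hKS]; exact S.finite_toSet.isCompact_convexHull ℝ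
  obtain ⟨F, hF, hKF⟩ : ∃ F : Set E, F.Finite ∧ K = {x | ∀ u ∈ F, ⟪u, x⟫_ℝ ≤ 1 + ⟪u, x0⟫_ℝ} := by
    have e : convexHull ℝ ((S.image fun p => p - x0 : Finset E) : Set E) = (fun x => x + x0) ⁻¹' K := by
      rw [hKS]
      have h1 : ((S.image fun p => p - x0 : Finset E) : Set E) = (AffineEquiv.constVAdd ℝ E (-x0)) '' (S : Set E) := by
        ext y; simp [sub_eq_neg_add]
      have h2 := (AffineMap.image_convexHull (AffineEquiv.constVAdd ℝ E (-x0)).toAffineMap (S : Set E))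
      simp only [AffineEquiv.coe_toAffineMap] at h2
      rw [h1, ← h2]
      ext y
      constructor
      · rintro ⟨z, hz, rfl⟩; simpa using hz
      · intro hy; exact ⟨y + x0, hy, by simp⟩
    obtain ⟨F, hF, h⟩ := hrep_zero (S.image fun p => p - x0) (by
      rw [e]
      rw [show (fun x => x + x0) ⁻¹' K = (Homeomorph.addRight x0) ⁻¹' K from rfl, ← Homeomorph.preimage_interior]
      simpa using hx0)
    refine ⟨F, hF, ?_⟩
    ext x
    have := Set.ext_iff.1 (e.symm.trans h) (x - x0)
    simp only [mem_preimage, sub_add_cancel, mem_ofPred_eq, inner_sub_right] at this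
    rw [this]
    simp only [mem_ofPred_eq, tsub_le_iff_right]
  set D : Finset E := (hF.toFinset.filter (· ≠ 0)).image fun u => ‖u‖⁻¹ • u with hD
  have hD1 : ∀ d ∈ D, ‖d‖ = 1 := by
    intro d hd
    obtain ⟨u, hu, rfl⟩ := Finset.mem_image.1 hd
    exact norm_smul_inv_norm (𝕜 := ℝ) (Finset.mem_filter.1 hu).2
  obtain ⟨U, hUD, hU1, hU2⟩ := half_system D (fun d hd h => by
    have := hD1 d hd
    have h0 : d = 0 := by
      have h2 : (2:ℝ) • d = 0 := by rw [two_smul]; nth_rewrite 2 [h]; simp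
      simpa using h2
    rw [h0] at this; simp at this)
  have hx0K := interior_subset hx0
  have hmin : ∀ j : U, ∃ x ∈ K, ∀ y ∈ K, ⟪(j:E), x⟫_ℝ ≤ ⟪(j:E), y⟫_ℝ := fun j =>
    hKc.exists_isMinOn ⟨x0, hx0K⟩ (f := fun x => ⟪(j:E), x⟫_ℝ) (by fun_prop)
  have hmax : ∀ j : U, ∃ x ∈ K, ∀ y ∈ K, ⟪(j:E), y⟫_ℝ ≤ ⟪(j:E), x⟫_ℝ := fun j =>
    hKc.exists_isMaxOn ⟨x0, hx0K⟩ (f := fun x => ⟪(j:E), x⟫_ℝ) (by fun_prop)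
  choose xm hxm hxm' using hmin
  choose xM hxM hxM' using hmax
  have hKeq : K = {x : E | ∀ j : U, ⟪(j:E), xm j⟫_ℝ ≤ ⟪(j:E), x⟫_ℝ ∧ ⟪(j:E), x⟫_ℝ ≤ ⟪(j:E), xM j⟫_ℝ} := by
    ext x; constructor
    · intro hx j; exact ⟨hxm' j x hx, hxM' j x hx⟩
    · intro hx
      rw [hKF]
      intro u hu
      by_cases hu0 : u = 0
      · subst hu0; simp
      have hun : 0 < ‖u‖ := norm_pos_iff.2 hu0
      have hd : ‖u‖⁻¹ • u ∈ D := Finset.mem_image.2 ⟨u, by simp [hu, hu0], rfl⟩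
      have key : ∀ y ∈ K, ⟪u, x⟫_ℝ ≤ ⟪u, y⟫_ℝ → ⟪u, x⟫_ℝ ≤ 1 + ⟪u, x0⟫_ℝ := by
        intro y hy hxy
        rw [hKF] at hy
        exact hxy.trans (hy u hu)
      rcases hU1 _ hd with h | h
      · refine key _ (hxM ⟨_, h⟩) ?_
        have := (hx ⟨_, h⟩).2
        simp only [inner_smul_left] at this
        exact le_of_mul_le_mul_left this (by simpa using hun)
      · refine key _ (hxm ⟨_, h⟩) ?_
        have := (hx ⟨_, h⟩).1
        simp only [inner_neg_left, inner_smul_left, neg_le_neg_iff] at this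
        exact le_of_mul_le_mul_left this (by simpa using hun)
  refine ⟨U, fun u hu => hD1 u (hUD hu), ?_, ?_, fun j => ⟪(j:E), xm j⟫_ℝ, fun j => ⟪(j:E), xM j⟫_ℝ, hKeq,
    fun j => ⟨_, hxm j, rfl⟩, fun j => ⟨_, hxM j, rfl⟩⟩
  · intro u hu v hv huv t ht
    have h1 := hD1 u (hUD hu)
    rw [ht, norm_smul, hD1 v (hUD hv), mul_one, Real.norm_eq_abs] at h1
    rcases (abs_eq zero_le_one).1 h1 with h2 | h2
    · rw [h2, one_smul] at ht; exact huv ht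
    · rw [h2, neg_one_smul] at ht
      exact hU2 v hv (ht ▸ hu)
  · intro l h
    let L : E →ₗ[ℝ] (U → ℝ) := LinearMap.pi fun j => (innerSL ℝ (j:E)).toLinearMap
    have hL : ∀ x j, L x j = ⟪(j:E), x⟫_ℝ := fun x j => rfl
    have hinj : LinearMap.ker L = ⊥ := by
      rw [LinearMap.ker_eq_bot']
      intro x hx
      by_contra hx0'
      obtain ⟨M, hM⟩ := hKc.isBounded.exists_norm_le
      have hin : ∀ s : ℝ, x0 + s • x ∈ K := by
        intro s
        rw [hKeq]
        intro j
        have h0 : ⟪(j:E), x⟫_ℝ = 0 := by rw [← hL, hx]; rfl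
        rw [inner_add_right, inner_smul_right, h0, mul_zero, add_zero]
        exact ⟨hxm' j x0 hx0K, hxM' j x0 hx0K⟩
      have hxn : 0 < ‖x‖ := norm_pos_iff.2 hx0'
      have h1 := hM _ (hin ((2 * M + 1) / ‖x‖))
      have h2 := hM _ hx0K
      have h3 := norm_sub_le (x0 + ((2 * M + 1) / ‖x‖) • x) x0
      rw [add_sub_cancel_left, norm_smul, Real.norm_eq_abs] at h3
      have h4 : (2 * M + 1) / ‖x‖ * ‖x‖ ≤ |(2 * M + 1) / ‖x‖| * ‖x‖ := by gcongr; exact le_abs_self _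
      rw [div_mul_cancel₀ _ hxn.ne'] at h4
      linarith
    obtain ⟨C, _, hC⟩ := L.exists_antilipschitzWith hinj
    have := hC.isBounded_preimage (Metric.isBounded_Icc l h)
    refine this.subset fun x hx => ?_
    exact ⟨fun j => (hx j).1, fun j => (hx j).2⟩
end

section
open Set Filter Topology
open scoped ENNReal

/-- standard coordinates -/
noncomputable def stdC (n : ℕ) : EuclideanSpace ℝ (Fin (n+1)) ≃L[ℝ] ℝ × (Fin n → ℝ) :=
  (EuclideanSpace.equiv (Fin (n+1)) ℝ).trans (Fin.consEquivL ℝ (fun _ : Fin (n+1) => ℝ)).symm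

theorem stdC_fst (n : ℕ) (x : EuclideanSpace ℝ (Fin (n+1))) : (stdC n x).1 = x 0 := rfl

theorem stdC_snd (n : ℕ) (x : EuclideanSpace ℝ (Fin (n+1))) (k : Fin n) : (stdC n x).2 k = x k.succ := rfl

theorem stdC_mp (n : ℕ) : MeasurePreserving (stdC n) := by
  have h1 := PiLp.volume_preserving_ofLp (Fin (n+1))
  have h2 := volume_preserving_piFinSuccAbove (fun _ : Fin (n+1) => ℝ) 0
  exact h2.comp h1

theorem pl_euclid (n : ℕ) : PLSpace (EuclideanSpace ℝ (Fin n)) :=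
  pl_transfer (pl_pi n) (EuclideanSpace.equiv (Fin n) ℝ).symm.toLinearMap
    (PiLp.volume_preserving_toLp (Fin n))

theorem exists_isom (n : ℕ) (u : EuclideanSpace ℝ (Fin (n+1))) (hu : ‖u‖ = 1) :
    ∃ T : EuclideanSpace ℝ (Fin (n+1)) ≃ₗᵢ[ℝ] EuclideanSpace ℝ (Fin (n+1)),
      T u = EuclideanSpace.single 0 1 :=
  ⟨_, Submodule.reflection_sub (show ‖u‖ = ‖(EuclideanSpace.single 0 1 : EuclideanSpace ℝ (Fin (n+1)))‖ by simp [hu])⟩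

/-- rotated coordinates -/
noncomputable def rotC {n : ℕ} (T : EuclideanSpace ℝ (Fin (n+1)) ≃ₗᵢ[ℝ] EuclideanSpace ℝ (Fin (n+1))) :
    EuclideanSpace ℝ (Fin (n+1)) ≃L[ℝ] ℝ × (Fin n → ℝ) :=
  T.toContinuousLinearEquiv.trans (stdC n)

theorem rotC_mp {n : ℕ} (T : EuclideanSpace ℝ (Fin (n+1)) ≃ₗᵢ[ℝ] EuclideanSpace ℝ (Fin (n+1))) :
    MeasurePreserving (rotC T) := (stdC_mp n).comp T.measurePreserving

theorem rotC_fst {n : ℕ} (T : EuclideanSpace ℝ (Fin (n+1)) ≃ₗᵢ[ℝ] EuclideanSpace ℝ (Fin (n+1)))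
    {u : EuclideanSpace ℝ (Fin (n+1))} (hT : T u = EuclideanSpace.single 0 1) (x) :
    (rotC T x).1 = ⟪u, x⟫_ℝ := by
  rw [← T.inner_map_map, hT]
  simp [rotC, stdC_fst, EuclideanSpace.inner_single_left]

/-- the functionals in rotated coordinates -/
noncomputable def rphi {n : ℕ} {ι : Type*} (T : EuclideanSpace ℝ (Fin (n+1)) ≃ₗᵢ[ℝ] EuclideanSpace ℝ (Fin (n+1)))
    (u : ι → EuclideanSpace ℝ (Fin (n+1))) (j : ι) : (ℝ × (Fin n → ℝ)) →L[ℝ] ℝ :=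
  (innerSL ℝ (u j)).comp (rotC T).symm.toContinuousLinearMap

theorem rphi_apply {n : ℕ} {ι : Type*} (T : EuclideanSpace ℝ (Fin (n+1)) ≃ₗᵢ[ℝ] EuclideanSpace ℝ (Fin (n+1)))
    (u : ι → EuclideanSpace ℝ (Fin (n+1))) (j : ι) (x) : rphi T u j (rotC T x) = ⟪u j, x⟫_ℝ := by
  simp [rphi]

section
variable {ι : Type*} [Fintype ι] {n : ℕ} (φ : ι → ((ℝ × (Fin n → ℝ)) →L[ℝ] ℝ)) (i : ι)
  (hi : ∀ p, φ i p = p.1)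
  (hbd : ∀ l h, Bornology.IsBounded (slabX φ l h))

include hi hbd in
theorem slabX_moment (l h : ι → ℝ) (hlh : l i ≤ h i) :
    ∫ p in slabX φ l h, p.1 = ∫ r in (l i)..(h i), r * volume.real (Ssec φ i l h r) := by
  have hm : MeasurableSet (slabX φ l h) := (slabX_closed φ l h).measurableSet
  rw [← integral_indicator hm, Measure.volume_eq_prod, integral_prod]
  · rw [intervalIntegral.integral_of_le hlh, ← integral_Icc_eq_integral_Ioc,
      ← integral_indicator measurableSet_Icc]
    congr 1; ext r
    by_cases hr : r ∈ Icc (l i) (h i)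
    · rw [indicator_of_mem hr]
      rw [show (fun y => (slabX φ l h).indicator (fun p => p.1) (r, y)) =
        (Ssec φ i l h r).indicator (fun _ => r) from ?_]
      · rw [integral_indicator (Ssec_closed φ i _ _ _).measurableSet]; simp [mul_comm]
      · ext y
        have : (r, y) ∈ slabX φ l h ↔ y ∈ Ssec φ i l h r := by
          refine ⟨fun H j _ => H j, fun H j => ?_⟩
          by_cases hj : j = i
          · subst hj; simpa [hi] using hr
          · exact H j hj
        by_cases hy : y ∈ Ssec φ i l h r
        · rw [indicator_of_mem hy, indicator_of_mem (this.2 hy)]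
        · rw [indicator_of_notMem hy, indicator_of_notMem (fun H => hy (this.1 H))]
    · rw [indicator_of_notMem hr]
      rw [show (fun y => (slabX φ l h).indicator (fun p => p.1) (r, y)) = fun _ => 0 from ?_]
      · simp
      · ext y
        refine indicator_of_notMem (fun H => hr ?_) _
        have := H i
        simpa [hi] using this
  · rw [← Measure.volume_eq_prod]
    refine (integrable_indicator_iff hm).2 ?_
    exact (continuous_fst.continuousOn).integrableOn_compact
      (Metric.isCompact_of_isClosed_isBounded (slabX_closed φ l h) (hbd l h))
end

section
variable {ι : Type*} [Fintype ι] [DecidableEq ι] {n : ℕ}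
  (u : ι → EuclideanSpace ℝ (Fin (n+1))) (hu : ∀ j, ‖u j‖ = 1)
  (hpar : ∀ j k, j ≠ k → ∀ t : ℝ, u j ≠ t • u k)
  (hbd : ∀ l h : ι → ℝ, Bornology.IsBounded {x | ∀ j, l j ≤ ⟪u j, x⟫_ℝ ∧ ⟪u j, x⟫_ℝ ≤ h j})
  (T : ι → (EuclideanSpace ℝ (Fin (n+1)) ≃ₗᵢ[ℝ] EuclideanSpace ℝ (Fin (n+1))))
  (hT : ∀ i, T i (u i) = EuclideanSpace.single 0 1)

theorem rphi_slab (T : EuclideanSpace ℝ (Fin (n+1)) ≃ₗᵢ[ℝ] EuclideanSpace ℝ (Fin (n+1))) (l h : ι → ℝ) :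
    {x | ∀ j, l j ≤ ⟪u j, x⟫_ℝ ∧ ⟪u j, x⟫_ℝ ≤ h j} = rotC T ⁻¹' slabX (rphi T u) l h := by
  ext x; simp [slabX, rphi_apply]

include hbd in
theorem rphi_bd (T : EuclideanSpace ℝ (Fin (n+1)) ≃ₗᵢ[ℝ] EuclideanSpace ℝ (Fin (n+1))) (l h : ι → ℝ) :
    Bornology.IsBounded (slabX (rphi T u) l h) := by
  have := (rotC T).lipschitz.isBounded_image (hbd l h)
  rw [rphi_slab u T] at this
  rwa [image_preimage_eq _ (rotC T).surjective] at this

theorem rphi_fst (T : EuclideanSpace ℝ (Fin (n+1)) ≃ₗᵢ[ℝ] EuclideanSpace ℝ (Fin (n+1))) (i : ι)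
    (hT : T (u i) = EuclideanSpace.single 0 1) (p) : rphi T u i p = p.1 := by
  obtain ⟨x, rfl⟩ := (rotC T).surjective p
  rw [rphi_apply, rotC_fst T hT]

include hpar in
theorem rphi_par (T : EuclideanSpace ℝ (Fin (n+1)) ≃ₗᵢ[ℝ] EuclideanSpace ℝ (Fin (n+1))) (i : ι)
    (hT : T (u i) = EuclideanSpace.single 0 1) (j : ι) (hj : j ≠ i) : ∃ y, rphi T u j (0, y) ≠ 0 := by
  by_contra! H
  refine hpar j i hj (rphi T u j (1, 0)) ?_
  refine ext_inner_right ℝ fun x => ?_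
  rw [inner_smul_left, ← rotC_fst T hT, ← rphi_apply T u j x]
  have : rotC T x = (rotC T x).1 • ((1:ℝ), (0 : Fin n → ℝ)) + (0, (rotC T x).2) := by ext <;> simp
  nth_rewrite 1 [this]
  rw [map_add, map_smul, H]; simp [mul_comm]

theorem rphi_vol (T : EuclideanSpace ℝ (Fin (n+1)) ≃ₗᵢ[ℝ] EuclideanSpace ℝ (Fin (n+1))) (l h : ι → ℝ) :
    volume.real {x | ∀ j, l j ≤ ⟪u j, x⟫_ℝ ∧ ⟪u j, x⟫_ℝ ≤ h j} = volume.real (slabX (rphi T u) l h) := by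
  rw [rphi_slab u T, measureReal_def, measureReal_def,
    (rotC_mp T).measure_preimage (slabX_closed _ _ _).measurableSet.nullMeasurableSet]

include hbd in
theorem slab_mid (l h l' h' : ι → ℝ) :
    volume.real {x | ∀ j, l j ≤ ⟪u j, x⟫_ℝ ∧ ⟪u j, x⟫_ℝ ≤ h j} *
    volume.real {x | ∀ j, l' j ≤ ⟪u j, x⟫_ℝ ∧ ⟪u j, x⟫_ℝ ≤ h' j} ≤
    volume.real {x | ∀ j, ((1/2:ℝ) • (l + l')) j ≤ ⟪u j, x⟫_ℝ ∧ ⟪u j, x⟫_ℝ ≤ ((1/2:ℝ) • (h + h')) j} ^ 2 := by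
  have hm : ∀ l h : ι → ℝ, MeasurableSet {x | ∀ j, l j ≤ ⟪u j, x⟫_ℝ ∧ ⟪u j, x⟫_ℝ ≤ h j} := fun l h =>
    (slabX_closed (fun j => innerSL ℝ (u j)) l h).measurableSet
  have := pl_euclid (n+1) ({x | ∀ j, l j ≤ ⟪u j, x⟫_ℝ ∧ ⟪u j, x⟫_ℝ ≤ h j}.indicator 1)
    ({x | ∀ j, l' j ≤ ⟪u j, x⟫_ℝ ∧ ⟪u j, x⟫_ℝ ≤ h' j}.indicator 1)
    ({x | ∀ j, ((1/2:ℝ) • (l + l')) j ≤ ⟪u j, x⟫_ℝ ∧ ⟪u j, x⟫_ℝ ≤ ((1/2:ℝ) • (h + h')) j}.indicator 1)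
    (measurable_one.indicator (hm _ _)) (measurable_one.indicator (hm _ _)) (measurable_one.indicator (hm _ _)) (by
      intro x y
      by_cases hx : x ∈ {x | ∀ j, l j ≤ ⟪u j, x⟫_ℝ ∧ ⟪u j, x⟫_ℝ ≤ h j}
      · by_cases hy : y ∈ {x | ∀ j, l' j ≤ ⟪u j, x⟫_ℝ ∧ ⟪u j, x⟫_ℝ ≤ h' j}
        · have : (1/2:ℝ) • (x + y) ∈ {x | ∀ j, ((1/2:ℝ) • (l + l')) j ≤ ⟪u j, x⟫_ℝ ∧ ⟪u j, x⟫_ℝ ≤ ((1/2:ℝ) • (h + h')) j} := by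
            intro j
            have h1 := hx j
            have h2 := hy j
            simp only [Pi.smul_apply, Pi.add_apply, smul_eq_mul, inner_smul_right, inner_add_right]
            constructor <;> linarith
          rw [indicator_of_mem hx, indicator_of_mem hy, indicator_of_mem this]; simp
        · rw [indicator_of_notMem hy]; simp
      · rw [indicator_of_notMem hx]; simp)
  rw [lintegral_indicator_one (hm _ _), lintegral_indicator_one (hm _ _), lintegral_indicator_one (hm _ _)] at this
  have h2 := ENNReal.toReal_mono (ENNReal.pow_ne_top (hbd _ _).measure_lt_top.ne) this
  rw [ENNReal.toReal_mul, ENNReal.toReal_pow] at h2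
  exact h2

omit [Fintype ι] [DecidableEq ι] in
theorem slab_neg (l h : ι → ℝ) :
    volume.real {x | ∀ j, (-h) j ≤ ⟪u j, x⟫_ℝ ∧ ⟪u j, x⟫_ℝ ≤ (-l) j} =
    volume.real {x | ∀ j, l j ≤ ⟪u j, x⟫_ℝ ∧ ⟪u j, x⟫_ℝ ≤ h j} := by
  have : {x | ∀ j, (-h) j ≤ ⟪u j, x⟫_ℝ ∧ ⟪u j, x⟫_ℝ ≤ (-l) j} =
      -{x | ∀ j, l j ≤ ⟪u j, x⟫_ℝ ∧ ⟪u j, x⟫_ℝ ≤ h j} := by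
    ext x
    simp only [mem_ofPred_eq, Set.mem_neg, inner_neg_right, Pi.neg_apply]
    refine forall_congr' fun j => ?_
    constructor <;> rintro ⟨h1, h2⟩ <;> constructor <;> linarith
  rw [this, measureReal_def, Measure.measure_neg, ← measureReal_def]

include hu hpar hbd hT in
theorem exists_asymm (l h : ι → ℝ) (K : Set (EuclideanSpace ℝ (Fin (n+1))))
    (hK : K = {x | ∀ j, l j ≤ ⟪u j, x⟫_ℝ ∧ ⟪u j, x⟫_ℝ ≤ h j})
    (hl : ∀ j, ∃ x ∈ K, ⟪u j, x⟫_ℝ = l j) (hh : ∀ j, ∃ x ∈ K, ⟪u j, x⟫_ℝ = h j)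
    (hKint : (interior K).Nonempty)
    (hns : ¬ ∃ c, (fun y => c - y) '' K = (fun y => y - c) '' K) :
    ∃ i, volume.real (Ssec (rphi (T i) u) i l h (h i)) ≠ volume.real (Ssec (rphi (T i) u) i l h (l i)) := by
  by_contra! heq
  obtain ⟨x0, hx0⟩ := hKint
  have hconv : ∀ x ∈ K, ∀ j, l j ≤ ⟪u j, x⟫_ℝ ∧ ⟪u j, x⟫_ℝ ≤ h j := fun x hx => by rw [hK] at hx; exact hx
  have hstrict : ∀ j, l j < ⟪u j, x0⟫_ℝ ∧ ⟪u j, x0⟫_ℝ < h j := by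
    intro j
    obtain ⟨r, hr, hball⟩ := Metric.mem_nhds_iff.1 (mem_interior_iff_mem_nhds.1 hx0)
    have hm : ∀ s : ℝ, |s| < r → x0 + s • u j ∈ K := fun s hs => hball (by
      simp [norm_smul, hu, hs])
    have h1 := (hconv _ (hm (r/2) (by rw [abs_of_pos] <;> linarith)) j).2
    have h2 := (hconv _ (hm (-(r/2)) (by rw [abs_neg, abs_of_pos] <;> linarith)) j).1
    rw [inner_add_right, inner_smul_right, real_inner_self_eq_norm_sq, hu] at h1 h2
    constructor <;> linarith
  have hlh : ∀ j, l j < h j := fun j => (hstrict j).1.trans (hstrict j).2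
  have hvpos : 0 < volume.real {x | ∀ j, l j ≤ ⟪u j, x⟫_ℝ ∧ ⟪u j, x⟫_ℝ ≤ h j} := by
    rw [measureReal_def]
    refine ENNReal.toReal_pos ?_ (hbd l h).measure_lt_top.ne
    rw [← hK]
    exact (lt_of_lt_of_le (isOpen_interior.measure_pos volume ⟨x0, hx0⟩) (measure_mono interior_subset)).ne'
  have hzr : ∀ i, ∀ r ∈ Ioo (l i) (h i), ∃ z, ⟪u i, z⟫_ℝ = r ∧ ∀ j, l j < ⟪u j, z⟫_ℝ ∧ ⟪u j, z⟫_ℝ < h j := by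
    intro i r hr
    have comb : ∀ x ∈ K, ∀ θ : ℝ, 0 ≤ θ → θ < 1 → ∀ j, l j < ⟪u j, x0 + θ • (x - x0)⟫_ℝ ∧ ⟪u j, x0 + θ • (x - x0)⟫_ℝ < h j := by
      intro x hx θ h0 h1 j
      have a := hconv x hx j
      have b := hstrict j
      rw [inner_add_right, inner_smul_right, inner_sub_right]
      constructor <;> nlinarith
    rcases le_total ⟪u i, x0⟫_ℝ r with hle | hle
    · obtain ⟨x, hx, hxe⟩ := hh i
      have hd : 0 < h i - ⟪u i, x0⟫_ℝ := sub_pos.2 (hstrict i).2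
      refine ⟨_, ?_, comb x hx ((r - ⟪u i, x0⟫_ℝ) / (h i - ⟪u i, x0⟫_ℝ)) (by apply div_nonneg <;> linarith) ?_⟩
      · rw [inner_add_right, inner_smul_right, inner_sub_right, hxe]; field_simp; ring
      · rw [div_lt_one hd]; linarith [hr.2]
    · obtain ⟨x, hx, hxe⟩ := hl i
      have hd : 0 < ⟪u i, x0⟫_ℝ - l i := sub_pos.2 (hstrict i).1
      refine ⟨_, ?_, comb x hx ((⟪u i, x0⟫_ℝ - r) / (⟪u i, x0⟫_ℝ - l i)) (by apply div_nonneg <;> linarith) ?_⟩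
      · rw [inner_add_right, inner_smul_right, inner_sub_right, hxe]; field_simp; ring
      · rw [div_lt_one hd]; linarith [hr.1]
  have hpos : ∀ i, ∀ r ∈ Ioo (l i) (h i), 0 < volume.real (Ssec (rphi (T i) u) i l h r) := by
    intro i r hr
    obtain ⟨z, hz, hzs⟩ := hzr i r hr
    have hfin : volume (Ssec (rphi (T i) u) i l h r) < ⊤ := by
      obtain ⟨R, hR⟩ := Ssec_bounded (rphi (T i) u) i (rphi_fst u (T i) i (hT i)) (rphi_bd u hbd (T i)) l h r
      exact (Metric.isBounded_closedBall.subset (hR.self_of_nhds)).measure_lt_top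
    rw [measureReal_def]
    refine ENNReal.toReal_pos ?_ hfin.ne
    have hop : IsOpen {y | ∀ j, j ≠ i → l j < rphi (T i) u j (r, y) ∧ rphi (T i) u j (r, y) < h j} := by
      have : {y | ∀ j, j ≠ i → l j < rphi (T i) u j (r, y) ∧ rphi (T i) u j (r, y) < h j} =
        ⋂ j, ⋂ (_ : j ≠ i), {y | l j < rphi (T i) u j (r, y) ∧ rphi (T i) u j (r, y) < h j} := by ext; simp
      rw [this]
      exact isOpen_iInter_of_finite fun j => isOpen_iInter_of_finite fun _ =>
        (isOpen_lt (f := fun _ => l j) (g := fun y => rphi (T i) u j (r, y)) (by fun_prop) (by fun_prop)).inter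
        (isOpen_lt (g := fun _ => h j) (f := fun y => rphi (T i) u j (r, y)) (by fun_prop) (by fun_prop))
    have hmem : (rotC (T i) z).2 ∈ {y | ∀ j, j ≠ i → l j < rphi (T i) u j (r, y) ∧ rphi (T i) u j (r, y) < h j} := by
      intro j _
      have : (r, (rotC (T i) z).2) = rotC (T i) z := by
        ext1
        · rw [rotC_fst (T i) (hT i)]; exact hz.symm
        · rfl
      rw [this, rphi_apply]
      exact hzs j
    refine ne_of_gt (lt_of_lt_of_le (hop.measure_pos volume ⟨_, hmem⟩) (measure_mono fun y hy j hj => ?_))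
    exact ⟨(hy j hj).1.le, (hy j hj).2.le⟩
  have hsym := section_symm (fun l h => volume.real {x | ∀ j, l j ≤ ⟪u j, x⟫_ℝ ∧ ⟪u j, x⟫_ℝ ≤ h j})
    (fun i l h r => volume.real (Ssec (rphi (T i) u) i l h r))
    (fun i => Asec_continuous (rphi (T i) u) i (rphi_fst u (T i) i (hT i)) (rphi_bd u hbd (T i))
      (rphi_par u hpar (T i) i (hT i)))
    (fun i l h hlh => by
      rw [rphi_vol u (T i)]
      exact slabX_fubini (rphi (T i) u) i (rphi_fst u (T i) i (hT i)) (rphi_bd u hbd (T i)) l h hlh)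
    (fun i l h a b r => by
      refine congrArg volume.real (Set.ext fun y => ?_)
      refine forall_congr' fun j => forall_congr' fun hj => ?_
      rw [Function.update_of_ne hj, Function.update_of_ne hj])
    (fun l h => measureReal_nonneg)
    (slab_mid u hbd) (slab_neg u) l h hlh hvpos hpos heq
  set v := volume.real K with hv
  have hvp : 0 < v := by rw [hv, hK]; exact hvpos
  have hKc : IsCompact K := by
    rw [hK]
    exact Metric.isCompact_of_isClosed_isBounded (slabX_closed (fun j => innerSL ℝ (u j)) l h) (hbd l h)
  set b := v⁻¹ • ∫ x in K, x with hb
  have hbi : ∀ i, ⟪u i, b⟫_ℝ = (l i + h i) / 2 := by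
    intro i
    have hKint : IntegrableOn (fun x : EuclideanSpace ℝ (Fin (n+1)) => x) K :=
      continuous_id.continuousOn.integrableOn_compact hKc
    have e1 : ⟪u i, ∫ x in K, x⟫_ℝ = ∫ x in K, ⟪u i, x⟫_ℝ := ((innerSL ℝ (u i)).integral_comp_comm hKint).symm
    have e2 : ∫ x in K, ⟪u i, x⟫_ℝ = ∫ p in slabX (rphi (T i) u) l h, p.1 := by
      rw [← (rotC_mp (T i)).setIntegral_preimage_emb (rotC (T i)).toHomeomorph.measurableEmbedding,
        ← rphi_slab u (T i), ← hK]
      simp only [rotC_fst (T i) (hT i)]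
    rw [slabX_moment (rphi (T i) u) i (rphi_fst u (T i) i (hT i)) (rphi_bd u hbd (T i)) l h (hlh i).le] at e2
    have e3 : v = ∫ r in (l i)..(h i), volume.real (Ssec (rphi (T i) u) i l h r) := by
      rw [hv, hK, rphi_vol u (T i)]
      exact slabX_fubini (rphi (T i) u) i (rphi_fst u (T i) i (hT i)) (rphi_bd u hbd (T i)) l h (hlh i).le
    have hAc : Continuous fun r => volume.real (Ssec (rphi (T i) u) i l h r) :=
      (Asec_continuous (rphi (T i) u) i (rphi_fst u (T i) i (hT i)) (rphi_bd u hbd (T i))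
      (rphi_par u hpar (T i) i (hT i))).comp (by fun_prop : Continuous fun r : ℝ => (l, h, r))
    set A := fun r => volume.real (Ssec (rphi (T i) u) i l h r) with hA
    have hsymA : ∀ r ∈ Ioo (l i) (h i), A r = A (l i + h i - r) := hsym i
    have e4 : ∫ r in (l i)..(h i), (l i + h i - r) * A (l i + h i - r) = ∫ r in (l i)..(h i), r * A r := by
      have := intervalIntegral.integral_comp_sub_left (a := l i) (b := h i) (fun r => r * A r) (l i + h i)
      rw [this]; congr 1 <;> ring
    have e5 : ∫ r in (l i)..(h i), (l i + h i - r) * A (l i + h i - r) = ∫ r in (l i)..(h i), ((l i + h i) * A r - r * A r) := by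
      refine intervalIntegral.integral_congr_ae ?_
      have : ∀ᵐ x : ℝ, x ≠ h i := by simp [ae_iff]
      filter_upwards [this] with x hx hx'
      rw [uIoc_of_le (hlh i).le] at hx'
      rw [← hsymA x ⟨hx'.1, lt_of_le_of_ne hx'.2 hx⟩]; ring
    have i1 : Continuous fun r => (l i + h i) * A r := hAc.const_mul _
    have i2 : Continuous fun r => r * A r := continuous_id.mul hAc
    rw [intervalIntegral.integral_sub (i1.intervalIntegrable _ _) (i2.intervalIntegrable _ _), intervalIntegral.integral_const_mul, ← e3] at e5
    have e6 : ∫ r in (l i)..(h i), r * A r = (l i + h i) / 2 * v := by linarith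
    rw [hb, inner_smul_right, e1, e2, e6]
    field_simp
  refine hns ⟨b, ?_⟩
  have hrefl : ∀ y ∈ K, 2 • b - y ∈ K := by
    intro y hy
    rw [hK]
    intro j
    have := hconv y hy j
    rw [inner_sub_right, two_smul, inner_add_right, hbi]
    constructor <;> linarith
  ext z
  constructor
  · rintro ⟨y, hy, rfl⟩
    exact ⟨2 • b - y, hrefl y hy, by simp only [two_smul]; abel⟩
  · rintro ⟨y, hy, rfl⟩
    exact ⟨2 • b - y, hrefl y hy, by simp only [two_smul]; abel⟩
end
end

section
open Set Filter Topology
open scoped ENNReal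

/-- the character -/
noncomputable def ee (x : ℝ) : ℂ := Complex.exp (-(2 * π * Complex.I * (x : ℂ)))

theorem ee_eq (x : ℝ) : ee x = (Real.fourierChar (-x) : ℂ) := by
  rw [Real.fourierChar_apply, ee]; congr 1; push_cast; ring

theorem ee_norm (x : ℝ) : ‖ee x‖ = 1 := by
  rw [ee_eq]; exact Circle.norm_coe _

theorem ee_add (x y : ℝ) : ee (x + y) = ee x * ee y := by
  rw [ee, ee, ee, ← Complex.exp_add]; congr 1; push_cast; ring

theorem ee_zero : ee 0 = 1 := by simp [ee]

theorem ee_cont : Continuous ee := by unfold ee; fun_prop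

theorem ee_integral (σ : ℝ) (hσ : σ ≠ 0) (a b : ℝ) :
    2 * π * Complex.I * σ * ∫ r in a..b, ee (σ * r) = ee (σ * a) - ee (σ * b) := by
  have hc : -(2 * π * Complex.I * (σ:ℂ)) ≠ 0 := by
    simp [hσ, Real.pi_ne_zero, Complex.I_ne_zero]
  have h1 : ∀ r : ℝ, ee (σ * r) = Complex.exp (-(2 * π * Complex.I * (σ:ℂ)) * r) := by
    intro r; rw [ee]; congr 1; push_cast; ring
  simp only [h1]
  rw [integral_exp_mul_complex hc]
  have e : ∀ z : ℝ, ee (σ * z) = Complex.exp (-(2 * π * Complex.I * (σ:ℂ)) * z) := h1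
  rw [← mul_div_assoc, div_eq_iff hc]
  ring

theorem one_dim {κ : Type*} [Fintype κ] [DecidableEq κ] (α d : κ → ℝ) (t b : κ) (ht : 0 < α t) (hb : α b < 0)
    (hgen : ∀ k m, k ≠ m → α k ≠ 0 → α m ≠ 0 → d k / α k ≠ d m / α m) (σ : ℝ) (hσ : σ ≠ 0) :
    2 * π * Complex.I * σ * (∫ r in {r : ℝ | ∀ k, α k * r ≤ d k}, ee (σ * r)) =
      - ∑ k, ((Real.sign (α k) : ℝ) : ℂ) *
        {q : ℝ | ∀ m, α m * q ≤ d m}.indicator (fun q => ee (σ * q)) (d k / α k) := by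
  classical
  set J := {r : ℝ | ∀ k, α k * r ≤ d k} with hJdef
  have hp : ∀ m, 0 < α m → ∀ x, α m * x ≤ d m ↔ x ≤ d m / α m := fun m hm x => by rw [le_div_iff₀' hm]
  have hn : ∀ m, α m < 0 → ∀ x, α m * x ≤ d m ↔ d m / α m ≤ x := fun m hm x => by rw [div_le_iff_of_neg' hm]
  obtain ⟨kp, hkp, hkpm⟩ := Finset.exists_min_image (Finset.univ.filter fun k => 0 < α k) (fun k => d k / α k) ⟨t, by simp [ht]⟩
  obtain ⟨km, hkm, hkmm⟩ := Finset.exists_max_image (Finset.univ.filter fun k => α k < 0) (fun k => d k / α k) ⟨b, by simp [hb]⟩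
  simp only [Finset.mem_filter, Finset.mem_univ, true_and] at hkp hkpm hkm hkmm
  set B := d kp / α kp with hB
  set A := d km / α km with hA
  by_cases Z : (∀ m, α m = 0 → 0 ≤ d m) ∧ A ≤ B
  · obtain ⟨Z, hAB⟩ := Z
    have hJ : J = Icc A B := by
      ext r
      constructor
      · intro hr; exact ⟨(hn km hkm r).1 (hr km), (hp kp hkp r).1 (hr kp)⟩
      · rintro ⟨h1, h2⟩ m
        rcases lt_trichotomy (α m) 0 with hm | hm | hm
        · exact (hn m hm r).2 ((hkmm m hm).trans h1)
        · rw [hm, zero_mul]; exact Z m hm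
        · exact (hp m hm r).2 (h2.trans (hkpm m hm))
    rw [hJ, integral_Icc_eq_integral_Ioc, ← intervalIntegral.integral_of_le hAB, ee_integral σ hσ]
    have hkpm' : kp ≠ km := fun h => by rw [h] at hkp; linarith
    have hs : ∑ k, ((Real.sign (α k) : ℝ) : ℂ) * (Icc A B).indicator (fun q => ee (σ * q)) (d k / α k) =
        ee (σ * B) - ee (σ * A) := by
      rw [← Finset.sum_subset (Finset.subset_univ {kp, km})]
      · rw [Finset.sum_pair hkpm', Real.sign_of_pos hkp, Real.sign_of_neg hkm, ← hA, ← hB,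
          indicator_of_mem (left_mem_Icc.2 hAB), indicator_of_mem (right_mem_Icc.2 hAB)]
        push_cast; ring
      · intro k _ hk
        simp only [Finset.mem_insert, Finset.mem_singleton, not_or] at hk
        rcases lt_trichotomy (α k) 0 with hm | hm | hm
        · rw [indicator_of_notMem, mul_zero]
          intro h
          exact hgen k km hk.2 hm.ne hkm.ne (le_antisymm (hkmm k hm) h.1)
        · rw [hm]; simp
        · rw [indicator_of_notMem, mul_zero]
          intro h
          exact hgen k kp hk.1 hm.ne' hkp.ne' (le_antisymm h.2 (hkpm k hm))
    rw [hs]; ring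
  · have hJ : J = ∅ := by
      rw [eq_empty_iff_forall_notMem]
      intro r hr
      refine Z ⟨fun m hm => ?_, ?_⟩
      · have := hr m; rwa [hm, zero_mul] at this
      · exact ((hn km hkm r).1 (hr km)).trans ((hp kp hkp r).1 (hr kp))
    rw [hJ]; simp

section
variable {κ : Type*} [Fintype κ] [DecidableEq κ] {n : ℕ}
/-- polyhedron -/
def Pc (ψ : κ → ((ℝ × (Fin n → ℝ)) →L[ℝ] ℝ)) (c : κ → ℝ) : Set (ℝ × (Fin n → ℝ)) := {x | ∀ k, ψ k x ≤ c k}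

/-- projected facet -/
def Uk (ψ : κ → ((ℝ × (Fin n → ℝ)) →L[ℝ] ℝ)) (k : κ) (c : κ → ℝ) : Set (Fin n → ℝ) :=
  {y | ((c k - ψ k (0, y)) / ψ k (1, 0), y) ∈ Pc ψ c}

variable (ψ : κ → ((ℝ × (Fin n → ℝ)) →L[ℝ] ℝ)) (hbd : ∀ c, Bornology.IsBounded (Pc ψ c))

theorem psi_split (f : (ℝ × (Fin n → ℝ)) →L[ℝ] ℝ) (r : ℝ) (y : Fin n → ℝ) :
    f (r, y) = f (1, 0) * r + f (0, y) := by
  have : (r, y) = r • ((1:ℝ), (0 : Fin n → ℝ)) + (0, y) := by ext <;> simp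
  rw [this, map_add, map_smul, smul_eq_mul, mul_comm]

omit [Fintype κ] [DecidableEq κ] in
theorem Pc_closed (c : κ → ℝ) : IsClosed (Pc ψ c) := by
  have : Pc ψ c = ⋂ k, {x | ψ k x ≤ c k} := by ext; simp [Pc]
  rw [this]
  exact isClosed_iInter fun k => isClosed_le (ψ k).continuous continuous_const

omit [Fintype κ] [DecidableEq κ] in
theorem Uk_closed (k : κ) (c : κ → ℝ) : IsClosed (Uk ψ k c) :=
  (Pc_closed ψ c).preimage (by fun_prop)

omit [DecidableEq κ] in
include hbd in
theorem Pc_bdd (c₀ : κ → ℝ) : ∃ R : ℝ, ∀ᶠ c in 𝓝 c₀, Pc ψ c ⊆ Metric.closedBall 0 R := by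
  obtain ⟨R, hR⟩ := (hbd (fun k => c₀ k + 1)).subset_closedBall 0
  refine ⟨R, ?_⟩
  have : ∀ᶠ c in 𝓝 c₀, ∀ k, c k < c₀ k + 1 := by
    rw [eventually_all]
    intro k
    exact (Continuous.tendsto' (by fun_prop) c₀ (c₀ k) rfl : Tendsto (fun c : κ → ℝ => c k) _ _).eventually_lt_const (by linarith)
  filter_upwards [this] with c hc
  exact (fun x hx => hR fun k => (hx k).trans (hc k).le)

omit [Fintype κ] [DecidableEq κ] in
theorem Uk_sub (k : κ) (c : κ → ℝ) {R : ℝ} (h : Pc ψ c ⊆ Metric.closedBall 0 R) :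
    Uk ψ k c ⊆ Metric.closedBall 0 R := by
  intro y hy
  have := h hy
  rw [mem_closedBall_zero_iff] at this ⊢
  exact (norm_snd_le _).trans this

/-- nondegeneracy -/
def NPc (c : κ → ℝ) : Prop := ∀ k m, k ≠ m → ψ k (1,0) ≠ 0 → ψ m = (ψ m (1,0) / ψ k (1,0)) • ψ k →
  c m ≠ (ψ m (1,0) / ψ k (1,0)) * c k

omit [DecidableEq κ] in
theorem NPc_open (c₀ : κ → ℝ) (h : NPc ψ c₀) : ∀ᶠ c in 𝓝 c₀, NPc ψ c := by
  simp only [NPc, eventually_all]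
  intro k m hkm hk he
  have := h k m hkm hk he
  exact (isOpen_ne_fun (f := fun c : κ → ℝ => c m) (g := fun c => (ψ m (1,0) / ψ k (1,0)) * c k)
    (by fun_prop) (by fun_prop)).mem_nhds this

omit [Fintype κ] [DecidableEq κ] in
theorem ae_gen (c : κ → ℝ) (h : NPc ψ c) (k m : κ) (hkm : k ≠ m) (hk : ψ k (1,0) ≠ 0) :
    ∀ᵐ y : Fin n → ℝ, ψ m ((c k - ψ k (0, y)) / ψ k (1, 0), y) ≠ c m := by
  set s := ψ m (1,0) / ψ k (1,0) with hs
  have := ae_ne_of_linear (volume : Measure (Fin n → ℝ))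
    ((ψ m - s • ψ k).comp (ContinuousLinearMap.inr ℝ ℝ (Fin n → ℝ))) (c m - s * c k) (by
      by_contra! H
      obtain ⟨H1, H2⟩ := H
      refine h k m hkm hk ?_ (by rw [← hs]; linarith)
      rw [← hs]
      ext p
      · simp [hs, hk]
      · have := DFunLike.congr_fun H1 p
        simp at this
        simp
        linarith)
  filter_upwards [this] with y hy h2
  apply hy
  rw [psi_split] at h2
  simp
  rw [← h2, hs]
  field_simp
  ring

include hbd in
theorem facet_formula (c : κ → ℝ) (h : NPc ψ c) (t b : κ) (ht : 0 < ψ t (1,0)) (hb : ψ b (1,0) < 0)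
    (w : (Fin n → ℝ) →L[ℝ] ℝ) (σ : ℝ) (hσ : σ ≠ 0) :
    2 * π * Complex.I * σ * (∫ x in Pc ψ c, ee (σ * x.1 + w x.2)) =
      - ∑ k, ((Real.sign (ψ k (1,0)) : ℝ) : ℂ) *
        ∫ y in Uk ψ k c, ee (w y + σ * ((c k - ψ k (0, y)) / ψ k (1, 0))) := by
  have hm : MeasurableSet (Pc ψ c) := (Pc_closed ψ c).measurableSet
  have hmU : ∀ k, MeasurableSet (Uk ψ k c) := fun k => (Uk_closed ψ k c).measurableSet
  have hUc : ∀ k, IsCompact (Uk ψ k c) := fun k => by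
    obtain ⟨R, hR⟩ := (hbd c).subset_closedBall 0
    exact Metric.isCompact_of_isClosed_isBounded (Uk_closed ψ k c)
      (Metric.isBounded_closedBall.subset (Uk_sub ψ k c hR))
  have hintU : ∀ k, Integrable ((Uk ψ k c).indicator fun y => ee (w y + σ * ((c k - ψ k (0, y)) / ψ k (1, 0)))) := fun k =>
    (integrable_indicator_iff (hmU k)).2
      (((ee_cont.comp (by fun_prop : Continuous fun y => (w y + σ * ((c k - ψ k (0, y)) / ψ k (1, 0))))).continuousOn).integrableOn_compact (hUc k))
  have hintP : Integrable ((Pc ψ c).indicator fun x => ee (σ * x.1 + w x.2)) :=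
    (integrable_indicator_iff hm).2
      (((ee_cont.comp (by fun_prop : Continuous fun x : ℝ × (Fin n → ℝ) => σ * x.1 + w x.2)).continuousOn).integrableOn_compact
        (Metric.isCompact_of_isClosed_isBounded (Pc_closed ψ c) (hbd c)))
  rw [← integral_indicator hm, Measure.volume_eq_prod, integral_prod_symm _ (by rwa [← Measure.volume_eq_prod]),
    ← integral_const_mul]
  simp only [← integral_indicator (hmU _)]
  simp only [← integral_const_mul]
  rw [← integral_finsetSum _ (fun k _ => (hintU k).const_mul _), ← integral_neg]
  refine integral_congr_ae ?_
  have hae : ∀ᵐ y : Fin n → ℝ, ∀ k m, k ≠ m → ψ k (1,0) ≠ 0 → ψ m ((c k - ψ k (0, y)) / ψ k (1, 0), y) ≠ c m := by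
    simp only [ae_all_iff]
    exact fun k m hkm hk => ae_gen ψ c h k m hkm hk
  filter_upwards [hae] with y hy
  have hg := one_dim (fun k => ψ k (1,0)) (fun k => c k - ψ k (0, y)) t b ht hb (by
    intro k m hkm hk hm he
    refine hy k m hkm hk ?_
    rw [psi_split, he]; field_simp; ring) σ hσ
  have e1 : ∫ r, (Pc ψ c).indicator (fun x => ee (σ * x.1 + w x.2)) (r, y) =
      ee (w y) * ∫ r in {r : ℝ | ∀ k, ψ k (1,0) * r ≤ c k - ψ k (0, y)}, ee (σ * r) := by
    have hmJ : MeasurableSet {r : ℝ | ∀ k, ψ k (1,0) * r ≤ c k - ψ k (0, y)} := by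
      have : {r : ℝ | ∀ k, ψ k (1,0) * r ≤ c k - ψ k (0, y)} = ⋂ k, {r : ℝ | ψ k (1,0) * r ≤ c k - ψ k (0, y)} := by
        ext; simp
      rw [this]
      exact (isClosed_iInter fun k => isClosed_le (by fun_prop) (by fun_prop)).measurableSet
    rw [← integral_indicator hmJ, ← integral_const_mul]
    congr 1; ext r
    have hiff : (r, y) ∈ Pc ψ c ↔ r ∈ {r : ℝ | ∀ k, ψ k (1,0) * r ≤ c k - ψ k (0, y)} := by
      refine forall_congr' fun k => ?_
      rw [psi_split]; constructor <;> intro h <;> linarith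
    by_cases hr : r ∈ {r : ℝ | ∀ k, ψ k (1,0) * r ≤ c k - ψ k (0, y)}
    · rw [indicator_of_mem hr, indicator_of_mem (hiff.2 hr), ← ee_add, add_comm]
    · rw [indicator_of_notMem hr, indicator_of_notMem (fun h => hr (hiff.1 h)), mul_zero]
  rw [integral_const_mul, e1, mul_left_comm, hg, mul_neg, Finset.mul_sum]
  congr 1
  refine Finset.sum_congr rfl fun k _ => ?_
  have hiff : y ∈ Uk ψ k c ↔ (c k - ψ k (0, y)) / ψ k (1, 0) ∈ {q : ℝ | ∀ m, ψ m (1,0) * q ≤ c m - ψ m (0, y)} := by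
    refine forall_congr' fun m => ?_
    rw [psi_split (ψ m)]; constructor <;> intro h <;> linarith
  by_cases hr : y ∈ Uk ψ k c
  · rw [indicator_of_mem hr, indicator_of_mem (hiff.1 hr), ee_add]; ring
  · rw [indicator_of_notMem hr, indicator_of_notMem (fun h => hr (hiff.2 h))]; ring
end
end

section
open Set Filter Topology
open scoped ENNReal

section
variable {κ : Type*} [Fintype κ] [DecidableEq κ] {n : ℕ}
variable (ψ : κ → ((ℝ × (Fin n → ℝ)) →L[ℝ] ℝ)) (hbd : ∀ c, Bornology.IsBounded (Pc ψ c))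
  (c₀ : κ → ℝ) (hNP : NPc ψ c₀)

omit [DecidableEq κ] in
include hNP in
theorem Uk_stable (k : κ) (hk : ψ k (1,0) ≠ 0) :
    ∀ᵐ y : Fin n → ℝ, ∀ᶠ c in 𝓝 c₀, (y ∈ Uk ψ k c ↔ y ∈ Uk ψ k c₀) := by
  have : ∀ᵐ y : Fin n → ℝ, ∀ m, k ≠ m → ψ m ((c₀ k - ψ k (0, y)) / ψ k (1, 0), y) ≠ c₀ m := by
    simp only [ae_all_iff]
    exact fun m hkm => ae_gen ψ c₀ hNP k m hkm hk
  filter_upwards [this] with y hy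
  have h2 : ∀ m, ∀ᶠ c in 𝓝 c₀, (ψ m ((c k - ψ k (0, y)) / ψ k (1, 0), y) ≤ c m ↔
      ψ m ((c₀ k - ψ k (0, y)) / ψ k (1, 0), y) ≤ c₀ m) := by
    intro m
    by_cases hkm : k = m
    · subst hkm
      refine Eventually.of_forall fun c => ?_
      have : ∀ c : κ → ℝ, ψ k ((c k - ψ k (0, y)) / ψ k (1, 0), y) ≤ c k := by
        intro c
        rw [psi_split, mul_div_cancel₀ _ hk]; linarith
      exact ⟨fun _ => this _, fun _ => this _⟩
    · have := eventually_le_iff_of_ne (F := 𝓝 c₀)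
        (f := fun c => ψ m ((c k - ψ k (0, y)) / ψ k (1, 0), y)) (g := fun c => c m)
        (Continuous.tendsto' (by fun_prop) _ _ rfl) (Continuous.tendsto' (by fun_prop) _ _ rfl) (hy m hkm)
      exact this.mono fun c hc => hc.1
  rw [← eventually_all] at h2
  filter_upwards [h2] with c hc
  exact forall_congr' hc

omit [DecidableEq κ] in
include hbd hNP in
theorem D_limit (k : κ) (hk : ψ k (1,0) ≠ 0) :
    Tendsto (fun q : (κ → ℝ) × ((Fin n → ℝ) →L[ℝ] ℝ) => ∫ y, ‖(Uk ψ k q.1).indicator (fun y => ee (q.2 y)) y -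
      (Uk ψ k c₀).indicator (fun _ => 1) y‖) (𝓝 c₀ ×ˢ 𝓝 0) (𝓝 0) := by
  obtain ⟨R, hR⟩ := Pc_bdd ψ hbd c₀
  have hR0 := Uk_sub ψ k c₀ hR.self_of_nhds
  have hR' : ∀ᶠ q : (κ → ℝ) × ((Fin n → ℝ) →L[ℝ] ℝ) in 𝓝 c₀ ×ˢ 𝓝 0, Pc ψ q.1 ⊆ Metric.closedBall 0 R :=
    tendsto_fst.eventually hR
  rw [← integral_zero (Fin n → ℝ) ℝ]
  refine tendsto_integral_filter_of_dominated_convergence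
    ((Metric.closedBall 0 R).indicator fun _ => 2) ?_ ?_ ?_ ?_
  · refine Eventually.of_forall fun q => ?_
    refine AEStronglyMeasurable.norm ?_
    refine AEStronglyMeasurable.sub ?_ ?_
    · exact (ee_cont.comp (q.2.continuous)).aestronglyMeasurable.indicator (Uk_closed ψ k q.1).measurableSet
    · exact aestronglyMeasurable_const.indicator (Uk_closed ψ k c₀).measurableSet
  · filter_upwards [hR'] with q hq
    refine Eventually.of_forall fun y => ?_
    by_cases hy : y ∈ Metric.closedBall (0 : Fin n → ℝ) R
    · rw [indicator_of_mem hy, norm_norm]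
      refine (norm_sub_le _ _).trans ?_
      have h1 : ‖(Uk ψ k q.1).indicator (fun y => ee (q.2 y)) y‖ ≤ 1 := by
        refine (norm_indicator_le_norm_self _ _).trans (ee_norm _).le
      have h2 : ‖(Uk ψ k c₀).indicator (fun _ => (1:ℂ)) y‖ ≤ 1 := by
        refine (norm_indicator_le_norm_self _ _).trans (by simp)
      linarith
    · rw [indicator_of_notMem (fun h => hy (Uk_sub ψ k q.1 hq h)), indicator_of_notMem (fun h => hy (hR0 h)),
        indicator_of_notMem hy]; simp
  · exact (integrable_indicator_iff Metric.isClosed_closedBall.measurableSet).2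
      (by simpa using (Metric.isBounded_closedBall (x := (0 : Fin n → ℝ)) (r := R)).measure_lt_top)
  · filter_upwards [Uk_stable ψ c₀ hNP k hk] with y hy
    have hy' : ∀ᶠ q : (κ → ℝ) × ((Fin n → ℝ) →L[ℝ] ℝ) in 𝓝 c₀ ×ˢ 𝓝 0, (y ∈ Uk ψ k q.1 ↔ y ∈ Uk ψ k c₀) :=
      tendsto_fst.eventually hy
    have hl : Tendsto (fun q : (κ → ℝ) × ((Fin n → ℝ) →L[ℝ] ℝ) => ‖ee (q.2 y) - 1‖) (𝓝 c₀ ×ˢ 𝓝 0) (𝓝 0) := by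
      rw [← nhds_prod_eq]
      refine Continuous.tendsto' ?_ _ _ (by simp [ee_zero])
      have : Continuous fun q : (κ → ℝ) × ((Fin n → ℝ) →L[ℝ] ℝ) => q.2 y := by fun_prop
      exact ((ee_cont.comp this).sub continuous_const).norm
    refine squeeze_zero' (Eventually.of_forall fun _ => norm_nonneg _) ?_ hl
    filter_upwards [hy'] with q hq
    by_cases h : y ∈ Uk ψ k c₀
    · rw [indicator_of_mem h, indicator_of_mem (hq.2 h)]
    · rw [indicator_of_notMem h, indicator_of_notMem (fun h' => h (hq.1 h'))]; simp

/-- facet term -/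
noncomputable def Wk (ψ : κ → ((ℝ × (Fin n → ℝ)) →L[ℝ] ℝ)) (k : κ) (p : ((κ → ℝ) × ((Fin n → ℝ) →L[ℝ] ℝ)) × ℝ) : ℂ :=
  ∫ y in Uk ψ k p.1.1, ee (p.1.2 y + p.2 * ((p.1.1 k - ψ k (0, y)) / ψ k (1, 0)))

omit [DecidableEq κ] in
include hbd hNP in
theorem W_approx (k : κ) (hk : ψ k (1,0) ≠ 0) :
    Tendsto (fun p : ((κ → ℝ) × ((Fin n → ℝ) →L[ℝ] ℝ)) × ℝ => Wk ψ k p -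
      ee (p.2 * (p.1.1 k / ψ k (1,0))) * ∫ y in Uk ψ k c₀, ee (p.2 * (-ψ k (0, y) / ψ k (1,0))))
      ((𝓝 c₀ ×ˢ 𝓝 0) ×ˢ cocompact ℝ) (𝓝 0) := by
  have hD := (D_limit ψ hbd c₀ hNP k hk).comp (tendsto_fst (f := 𝓝 c₀ ×ˢ 𝓝 0) (g := cocompact ℝ))
  refine squeeze_zero_norm (fun p => ?_) hD
  obtain ⟨⟨c, w⟩, σ⟩ := p
  have hUc : ∀ c, IsCompact (Uk ψ k c) := fun c => by
    obtain ⟨R, hR⟩ := (hbd c).subset_closedBall 0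
    exact Metric.isCompact_of_isClosed_isBounded (Uk_closed ψ k c)
      (Metric.isBounded_closedBall.subset (Uk_sub ψ k c hR))
  have hmU : ∀ c, MeasurableSet (Uk ψ k c) := fun c => (Uk_closed ψ k c).measurableSet
  have i1 : Integrable ((Uk ψ k c).indicator fun y => ee (w y + σ * ((c k - ψ k (0, y)) / ψ k (1, 0)))) :=
    (integrable_indicator_iff (hmU c)).2
      (((ee_cont.comp (by fun_prop : Continuous fun y => (w y + σ * ((c k - ψ k (0, y)) / ψ k (1, 0))))).continuousOn).integrableOn_compact (hUc c))
  have i2 : Integrable ((Uk ψ k c₀).indicator fun y => ee (σ * (-ψ k (0, y) / ψ k (1,0)))) :=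
    (integrable_indicator_iff (hmU c₀)).2
      (((ee_cont.comp (by fun_prop : Continuous fun y => (σ * (-ψ k (0, y) / ψ k (1, 0))))).continuousOn).integrableOn_compact (hUc c₀))
  simp only [Wk, Function.comp]
  rw [← integral_indicator (hmU c), ← integral_indicator (hmU c₀), ← integral_const_mul, ← integral_sub i1 (i2.const_mul _)]
  refine (norm_integral_le_integral_norm _).trans (le_of_eq ?_)
  congr 1; ext y
  have e : ee (w y + σ * ((c k - ψ k (0, y)) / ψ k (1, 0))) =
      ee (σ * (c k / ψ k (1,0))) * (ee (σ * (-ψ k (0, y) / ψ k (1,0))) * ee (w y)) := by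
    rw [← ee_add, ← ee_add]; congr 1; ring
  have : (Uk ψ k c).indicator (fun y => ee (w y + σ * ((c k - ψ k (0, y)) / ψ k (1, 0)))) y -
      ee (σ * (c k / ψ k (1,0))) * (Uk ψ k c₀).indicator (fun y => ee (σ * (-ψ k (0, y) / ψ k (1,0)))) y =
      ee (σ * (c k / ψ k (1,0))) * ee (σ * (-ψ k (0, y) / ψ k (1,0))) *
      ((Uk ψ k c).indicator (fun y => ee (w y)) y - (Uk ψ k c₀).indicator (fun _ => 1) y) := by
    by_cases h1 : y ∈ Uk ψ k c <;> by_cases h2 : y ∈ Uk ψ k c₀ <;>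
      simp only [h1, h2, indicator_of_mem, indicator_of_notMem, not_false_eq_true, e] <;> ring
  rw [this, norm_mul, norm_mul, ee_norm, ee_norm]; simp

omit [DecidableEq κ] in
include hbd hNP in
theorem W_zero (k : κ) (hk : ψ k (1,0) ≠ 0) (hy : ∃ y, ψ k (0, y) ≠ 0) :
    Tendsto (Wk ψ k) ((𝓝 c₀ ×ˢ 𝓝 0) ×ˢ cocompact ℝ) (𝓝 0) := by
  have hW := W_approx ψ hbd c₀ hNP k hk
  have hmU : MeasurableSet (Uk ψ k c₀) := (Uk_closed ψ k c₀).measurableSet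
  set b : StrongDual ℝ (Fin n → ℝ) := (-(ψ k (1,0))⁻¹) • (ψ k).comp (ContinuousLinearMap.inr ℝ ℝ (Fin n → ℝ)) with hb
  have hb0 : b ≠ 0 := by
    obtain ⟨y, hy⟩ := hy
    intro h
    have := DFunLike.congr_fun h y
    simp [hb, hk] at this
    exact hy this
  have hL : Tendsto (fun σ : ℝ => σ • b) (cocompact ℝ) (cocompact (StrongDual ℝ (Fin n → ℝ))) := by
    have := (LinearMap.isClosedEmbedding_of_injective (f := LinearMap.toSpanSingleton ℝ (StrongDual ℝ (Fin n → ℝ)) b)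
      (LinearMap.ker_eq_bot.2 (smul_left_injective ℝ hb0))).tendsto_cocompact
    exact this
  have hRL := (tendsto_integral_exp_smul_cocompact ((Uk ψ k c₀).indicator fun _ => (1:ℂ)) (volume : Measure (Fin n → ℝ))).comp hL
  have hRL' : Tendsto (fun σ : ℝ => ∫ y in Uk ψ k c₀, ee (σ * (-ψ k (0, y) / ψ k (1,0)))) (cocompact ℝ) (𝓝 0) := by
    refine hRL.congr fun σ => ?_
    rw [← integral_indicator hmU]
    simp only [Function.comp]
    congr 1; ext y
    by_cases h : y ∈ Uk ψ k c₀
    · rw [indicator_of_mem h, indicator_of_mem h, ee_eq, Circle.smul_def, smul_eq_mul, mul_one]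
      congr 2
      simp [hb]; ring
    · rw [indicator_of_notMem h, indicator_of_notMem h, smul_zero]
  have h2 : Tendsto (fun p : ((κ → ℝ) × ((Fin n → ℝ) →L[ℝ] ℝ)) × ℝ =>
      ee (p.2 * (p.1.1 k / ψ k (1,0))) * ∫ y in Uk ψ k c₀, ee (p.2 * (-ψ k (0, y) / ψ k (1,0))))
      ((𝓝 c₀ ×ˢ 𝓝 0) ×ˢ cocompact ℝ) (𝓝 0) := by
    have h3 := (hRL'.comp (tendsto_snd (f := 𝓝 c₀ ×ˢ (𝓝 (0 : (Fin n → ℝ) →L[ℝ] ℝ))) (g := cocompact ℝ))).norm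
    rw [norm_zero] at h3
    refine squeeze_zero_norm (fun p => ?_) h3
    rw [norm_mul, ee_norm, one_mul]; rfl
  simpa using hW.add h2

omit [DecidableEq κ] in
include hbd hNP in
theorem W_norm (k : κ) (hk : ψ k (1,0) ≠ 0) (hy : ∀ y, ψ k (0, y) = 0) :
    Tendsto (fun p => ‖Wk ψ k p‖) ((𝓝 c₀ ×ˢ 𝓝 0) ×ˢ cocompact ℝ) (𝓝 (volume.real (Uk ψ k c₀))) := by
  have hW := (W_approx ψ hbd c₀ hNP k hk).norm
  simp only [hy, neg_zero, zero_div, mul_zero, ee_zero, norm_zero] at hW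
  rw [tendsto_iff_norm_sub_tendsto_zero]
  refine squeeze_zero (fun _ => norm_nonneg _) (fun p => ?_) hW
  have := abs_norm_sub_norm_le (Wk ψ k p) (ee (p.2 * (p.1.1 k / ψ k (1,0))) * ∫ y in Uk ψ k c₀, (1:ℂ))
  rw [norm_mul, ee_norm, one_mul] at this
  simpa [abs_of_nonneg measureReal_nonneg] using this

include hbd hNP in
theorem fourier_ne (t b : κ) (ht : 0 < ψ t (1,0)) (hb : ψ b (1,0) < 0)
    (hty : ∀ y, ψ t (0, y) = 0) (hby : ∀ y, ψ b (0, y) = 0)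
    (hoth : ∀ k, k ≠ t → k ≠ b → ∃ y, ψ k (0, y) ≠ 0)
    (hne : volume.real (Uk ψ t c₀) ≠ volume.real (Uk ψ b c₀)) :
    ∀ᶠ p : ((κ → ℝ) × ((Fin n → ℝ) →L[ℝ] ℝ)) × ℝ in (𝓝 c₀ ×ˢ 𝓝 0) ×ˢ cocompact ℝ,
      ∫ x in Pc ψ p.1.1, ee (p.2 * x.1 + p.1.2 x.2) ≠ 0 := by
  have htb : t ≠ b := fun h => by rw [h] at ht; linarith
  have h1 := ((W_norm ψ hbd c₀ hNP t ht.ne' hty).sub (W_norm ψ hbd c₀ hNP b hb.ne hby)).abs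
  have hrest : Tendsto (fun p => ∑ k ∈ (Finset.univ.erase t).erase b, ((Real.sign (ψ k (1,0)) : ℝ) : ℂ) * Wk ψ k p)
      ((𝓝 c₀ ×ˢ 𝓝 0) ×ˢ cocompact ℝ) (𝓝 0) := by
    have hz : (0:ℂ) = ∑ k ∈ (Finset.univ.erase t).erase b, (0:ℂ) := by simp
    rw [hz]
    refine tendsto_finsetSum _ fun k hk => ?_
    have hkb := Finset.ne_of_mem_erase hk
    have hkt := Finset.ne_of_mem_erase (Finset.mem_of_mem_erase hk)
    by_cases hk0 : ψ k (1,0) = 0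
    · simp [hk0]
    · simpa using (W_zero ψ hbd c₀ hNP k hk0 (hoth k hkt hkb)).const_mul (((Real.sign (ψ k (1,0)) : ℝ) : ℂ))
  have h2 := hrest.norm
  rw [norm_zero] at h2
  have hpos : 0 < |volume.real (Uk ψ t c₀) - volume.real (Uk ψ b c₀)| := abs_pos.2 (sub_ne_zero.2 hne)
  have h3 := h2.eventually_lt h1 hpos
  have h4 : ∀ᶠ p : ((κ → ℝ) × ((Fin n → ℝ) →L[ℝ] ℝ)) × ℝ in (𝓝 c₀ ×ˢ 𝓝 0) ×ˢ cocompact ℝ, NPc ψ p.1.1 :=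
    (tendsto_fst.comp tendsto_fst).eventually (NPc_open ψ c₀ hNP)
  have h5 : ∀ᶠ p : ((κ → ℝ) × ((Fin n → ℝ) →L[ℝ] ℝ)) × ℝ in (𝓝 c₀ ×ˢ 𝓝 0) ×ˢ cocompact ℝ, p.2 ≠ 0 := by
    have : ∀ᶠ σ : ℝ in cocompact ℝ, σ ≠ 0 := (isCompact_singleton (x := (0:ℝ))).compl_mem_cocompact
    exact tendsto_snd.eventually this
  filter_upwards [h3, h4, h5] with p hp hnp hσ h0
  have hf := facet_formula ψ hbd p.1.1 hnp t b ht hb p.1.2 p.2 hσ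
  rw [h0, mul_zero] at hf
  have hf' : ∑ k, ((Real.sign (ψ k (1,0)) : ℝ) : ℂ) * Wk ψ k p = 0 := by
    rw [eq_comm, neg_eq_zero] at hf; exact hf
  rw [← Finset.add_sum_erase _ _ (Finset.mem_univ t),
    ← Finset.add_sum_erase _ _ (Finset.mem_erase.2 ⟨htb.symm, Finset.mem_univ b⟩),
    Real.sign_of_pos ht, Real.sign_of_neg hb] at hf'
  have e : Wk ψ t p - Wk ψ b p = - ∑ k ∈ (Finset.univ.erase t).erase b, ((Real.sign (ψ k (1,0)) : ℝ) : ℂ) * Wk ψ k p := by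
    rw [eq_neg_iff_add_eq_zero, ← hf']; push_cast; ring
  have h6 := abs_norm_sub_norm_le (Wk ψ t p) (Wk ψ b p)
  rw [e, norm_neg] at h6
  linarith
end
end

section
open Set Filter Topology
open scoped ENNReal

section
variable {ι : Type*} [Fintype ι] [DecidableEq ι] {n : ℕ} (φ : ι → ((ℝ × (Fin n → ℝ)) →L[ℝ] ℝ))

/-- doubled functionals -/
def dbl : ι ⊕ ι → ((ℝ × (Fin n → ℝ)) →L[ℝ] ℝ) := Sum.elim φ (fun j => -φ j)

/-- doubled bounds -/
def dblc {ι : Type*} (l h : ι → ℝ) : ι ⊕ ι → ℝ := Sum.elim h (fun j => -l j)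

omit [Fintype ι] [DecidableEq ι] in
theorem Pc_dbl (c : ι ⊕ ι → ℝ) : Pc (dbl φ) c = slabX φ (fun j => - c (Sum.inr j)) (fun j => c (Sum.inl j)) := by
  ext x
  simp only [Pc, slabX, mem_ofPred_eq, Sum.forall, dbl, Sum.elim_inl, Sum.elim_inr, neg_apply,
    forall_and]
  constructor
  · rintro ⟨a, b⟩; exact ⟨fun j => by linarith [b j], a⟩
  · rintro ⟨a, b⟩; exact ⟨b, fun j => by linarith [a j]⟩

omit [Fintype ι] [DecidableEq ι] in
theorem Pc_dblc (l h : ι → ℝ) : Pc (dbl φ) (dblc l h) = slabX φ l h := by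
  rw [Pc_dbl]; simp [dblc]

omit [Fintype ι] in
theorem NPc_dbl (hpar : ∀ j k, j ≠ k → ∀ t : ℝ, φ j ≠ t • φ k) (l h : ι → ℝ) (hlh : ∀ j, l j < h j) :
    NPc (dbl φ) (dblc l h) := by
  intro k m hkm hk0 hm
  rcases k with k | k <;> rcases m with m | m
  · exact absurd hm (hpar _ _ (fun h => hkm (by rw [h])) _)
  · by_cases e : m = k
    · subst e
      have h0 : φ m (1,0) ≠ 0 := hk0
      simp only [dbl, dblc, Sum.elim_inl, Sum.elim_inr, neg_apply, neg_div, div_self h0]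
      intro H; linarith [hlh m]
    · have hm' : -φ m = _ • φ k := hm
      rw [neg_eq_iff_eq_neg] at hm'
      exact absurd (hm'.trans (neg_smul _ _).symm) (hpar _ _ e _)
  · by_cases e : m = k
    · subst e
      have h0 : φ m (1,0) ≠ 0 := by
        have : (-φ m) (1,0) ≠ 0 := hk0
        simpa using this
      simp only [dbl, dblc, Sum.elim_inl, Sum.elim_inr, neg_apply, div_neg, div_self h0]
      intro H; linarith [hlh m]
    · have hm' : φ m = _ • (-φ k) := hm
      rw [smul_neg] at hm'
      exact absurd (hm'.trans (neg_smul _ _).symm) (hpar _ _ e _)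
  · have hm' : -φ m = _ • (-φ k) := hm
    rw [smul_neg, neg_inj] at hm'
    exact absurd hm' (hpar _ _ (fun h => hkm (by rw [h])) _)

omit [Fintype ι] in
theorem Uk_top (i : ι) (hi : ∀ p, φ i p = p.1) (l h : ι → ℝ) (hlh : l i < h i) :
    Uk (dbl φ) (Sum.inl i) (dblc l h) = Ssec φ i l h (h i) := by
  ext y
  have e : (dblc l h (Sum.inl i) - dbl φ (Sum.inl i) (0, y)) / dbl φ (Sum.inl i) (1, 0) = h i := by
    simp [dbl, dblc, hi]
  rw [Uk, mem_ofPred_eq, e, Pc_dblc]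
  refine ⟨fun H j _ => H j, fun H j => ?_⟩
  by_cases hj : j = i
  · subst hj; rw [hi]; exact ⟨hlh.le, le_rfl⟩
  · exact H j hj

omit [Fintype ι] in
theorem Uk_bot (i : ι) (hi : ∀ p, φ i p = p.1) (l h : ι → ℝ) (hlh : l i < h i) :
    Uk (dbl φ) (Sum.inr i) (dblc l h) = Ssec φ i l h (l i) := by
  ext y
  have e : (dblc l h (Sum.inr i) - dbl φ (Sum.inr i) (0, y)) / dbl φ (Sum.inr i) (1, 0) = l i := by
    simp [dbl, dblc, hi]
  rw [Uk, mem_ofPred_eq, e, Pc_dblc]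
  refine ⟨fun H j _ => H j, fun H j => ?_⟩
  by_cases hj : j = i
  · subst hj; rw [hi]; exact ⟨le_rfl, hlh.le⟩
  · exact H j hj

theorem core (i : ι) (hi : ∀ p, φ i p = p.1) (hbd : ∀ l h, Bornology.IsBounded (slabX φ l h))
    (hpar : ∀ j k, j ≠ k → ∀ t : ℝ, φ j ≠ t • φ k) (hy : ∀ j, j ≠ i → ∃ y, φ j (0, y) ≠ 0)
    (l h : ι → ℝ) (hlh : ∀ j, l j < h j)
    (hne : volume.real (Ssec φ i l h (h i)) ≠ volume.real (Ssec φ i l h (l i))) :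
    ∃ ε > (0:ℝ), ∃ R : ℝ, ∀ τ : ℝ × (Fin n → ℝ), ‖τ‖ < ε → ∀ w : (Fin n → ℝ) →L[ℝ] ℝ, ‖w‖ < ε →
      ∀ σ : ℝ, R ≤ |σ| → ∫ x in {x | x ∈ slabX φ l h ∧ x - τ ∈ slabX φ l h}, ee (σ * x.1 + w x.2) ≠ 0 := by
  have H := fourier_ne (dbl φ) (fun c => by rw [Pc_dbl]; exact hbd _ _) (dblc l h) (NPc_dbl φ hpar l h hlh)
    (Sum.inl i) (Sum.inr i) (by simp [dbl, hi]) (by simp [dbl, hi]) (by simp [dbl, hi]) (by simp [dbl, hi])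
    (by
      rintro (k | k) h1 h2
      · exact hy k (fun h => h1 (by rw [h]))
      · obtain ⟨y, hy⟩ := hy k (fun h => h2 (by rw [h]))
        exact ⟨y, by simpa [dbl] using hy⟩)
    (by rwa [Uk_top φ i hi l h (hlh i), Uk_bot φ i hi l h (hlh i)])
  have hc : Tendsto (fun τ : ℝ × (Fin n → ℝ) => fun k => min (dblc l h k) (dblc l h k + dbl φ k τ)) (𝓝 0) (𝓝 (dblc l h)) := by
    have : Continuous (fun τ : ℝ × (Fin n → ℝ) => fun k => min (dblc l h k) (dblc l h k + dbl φ k τ)) := by fun_prop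
    have := this.tendsto 0
    simpa using this
  have H2 := ((hc.prodMap (tendsto_id (x := 𝓝 (0 : (Fin n → ℝ) →L[ℝ] ℝ)))).prodMap (tendsto_id (x := cocompact ℝ))).eventually H
  rw [← nhds_prod_eq, eventually_prod_iff] at H2
  obtain ⟨pa, hpa, pb, hpb, hab⟩ := H2
  obtain ⟨ε, hε, hpa⟩ := Metric.eventually_nhds_iff.1 hpa
  rw [← Metric.cobounded_eq_cocompact, (hasBasis_cobounded_norm (E := ℝ)).eventually_iff] at hpb
  obtain ⟨R, -, hpb⟩ := hpb
  refine ⟨ε, hε, R, fun τ hτ w hw σ hσ => ?_⟩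
  have h1 : pa (τ, w) := hpa (by
    rw [dist_eq_norm]
    change ‖(τ, w) - 0‖ < ε
    rw [sub_zero, Prod.norm_def]; exact max_lt hτ hw)
  have h2 := hab h1 (hpb (x := σ) hσ)
  have e : {x | x ∈ slabX φ l h ∧ x - τ ∈ slabX φ l h} =
      Pc (dbl φ) (fun k => min (dblc l h k) (dblc l h k + dbl φ k τ)) := by
    rw [← Pc_dblc]
    ext x
    simp only [Pc, mem_ofPred_eq, map_sub, sub_le_iff_le_add, le_min_iff, forall_and]
  rw [e]
  exact h2
end
end

section
open Set Filter Topology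
open scoped ENNReal

theorem interior_of_vol {n : ℕ} (K : Set (EuclideanSpace ℝ (Fin n))) (hK : Convex ℝ K) (hv : 0 < volume K) :
    (interior K).Nonempty := by
  by_contra h
  rw [not_nonempty_iff_eq_empty] at h
  have h1 : K ⊆ frontier K := by
    rw [frontier, h, sdiff_empty]; exact subset_closure
  have h2 := measure_mono (μ := volume) h1
  rw [hK.addHaar_frontier volume] at h2
  exact absurd hv (not_lt.2 h2)

theorem strict_of_int {ι : Type*} {E : Type*} [NormedAddCommGroup E] [InnerProductSpace ℝ E]
    (u : ι → E) (hu : ∀ j, ‖u j‖ = 1) (l h : ι → ℝ) (K : Set E)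
    (hK : K = {x | ∀ j, l j ≤ ⟪u j, x⟫_ℝ ∧ ⟪u j, x⟫_ℝ ≤ h j}) (hKint : (interior K).Nonempty) (j : ι) : l j < h j := by
  obtain ⟨x0, hx0⟩ := hKint
  have hconv : ∀ x ∈ K, ∀ j, l j ≤ ⟪u j, x⟫_ℝ ∧ ⟪u j, x⟫_ℝ ≤ h j := fun x hx => by rw [hK] at hx; exact hx
  obtain ⟨r, hr, hball⟩ := Metric.mem_nhds_iff.1 (mem_interior_iff_mem_nhds.1 hx0)
  have hm : ∀ s : ℝ, |s| < r → x0 + s • u j ∈ K := fun s hs => hball (by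
    simp [norm_smul, hu, hs])
  have h1 := (hconv _ (hm (r/2) (by rw [abs_of_pos] <;> linarith)) j).2
  have h2 := (hconv _ (hm (-(r/2)) (by rw [abs_neg, abs_of_pos] <;> linarith)) j).1
  rw [inner_add_right, inner_smul_right, real_inner_self_eq_norm_sq, hu] at h1 h2
  linarith

/-- the horizontal part of a frequency -/
noncomputable def wcl (n : ℕ) (v : EuclideanSpace ℝ (Fin (n+1))) : (Fin n → ℝ) →L[ℝ] ℝ :=
  (innerSL ℝ v).comp ((stdC n).symm.toContinuousLinearMap.comp (ContinuousLinearMap.inr ℝ ℝ (Fin n → ℝ)))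

theorem wcl_inner (n : ℕ) (s : ℝ) (w x : EuclideanSpace ℝ (Fin (n+1))) :
    ⟪s • EuclideanSpace.single (0 : Fin (n+1)) (1:ℝ) + w, x⟫_ℝ = (s + w 0) * (stdC n x).1 + wcl n w (stdC n x).2 := by
  have hx : x = (x 0) • EuclideanSpace.single (0 : Fin (n+1)) (1:ℝ) + (stdC n).symm (0, (stdC n x).2) := by
    apply (stdC n).injective
    rw [map_add, map_smul, ContinuousLinearEquiv.apply_symm_apply]
    ext k
    · simp [stdC_fst]
    · simp [stdC_snd]
  have h1 : ⟪w, x⟫_ℝ = w 0 * x 0 + wcl n w (stdC n x).2 := by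
    conv_lhs => rw [hx]
    rw [inner_add_right, inner_smul_right, EuclideanSpace.inner_single_right]
    simp [wcl, mul_comm]
  rw [inner_add_left, h1, inner_smul_left, EuclideanSpace.inner_single_left, stdC_fst]
  simp; ring

theorem wcl_small (n : ℕ) : ∃ C > (0:ℝ), ∀ w, ‖wcl n w‖ ≤ C * ‖w‖ := by
  refine ⟨‖(stdC n).symm.toContinuousLinearMap.comp (ContinuousLinearMap.inr ℝ ℝ (Fin n → ℝ))‖ + 1, by positivity, fun w => ?_⟩
  refine (ContinuousLinearMap.opNorm_comp_le _ _).trans ?_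
  rw [innerSL_apply_norm, mul_comm]
  gcongr
  linarith

theorem stft_aux (n : ℕ)
    (S : Finset (EuclideanSpace ℝ (Fin (n+1))))
    (Ω : Set (EuclideanSpace ℝ (Fin (n+1))))
    (hΩ : Ω = convexHull ℝ (S : Set (EuclideanSpace ℝ (Fin (n+1)))))
    (hvol : 0 < volume Ω)
    (hnonsym : ¬ ∃ c : EuclideanSpace ℝ (Fin (n+1)),
      (fun y => c - y) '' Ω = (fun y => y - c) '' Ω) :
    ∃ T : EuclideanSpace ℝ (Fin (n+1)) ≃ᵃ[ℝ] EuclideanSpace ℝ (Fin (n+1)),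
      ∃ ε > (0:ℝ), ∃ R > (0:ℝ), ∃ δ > (0:ℝ),
        ∀ Ω' : Set (EuclideanSpace ℝ (Fin (n+1))), Ω' = T '' Ω →
          ∀ g : EuclideanSpace ℝ (Fin (n+1)) → ℂ,
            g = (fun x => (((volume Ω').toReal ^ (-(1:ℝ)/2) : ℝ) : ℂ) *
              Set.indicator Ω' (fun _ => (1:ℂ)) x) →
          ∀ t : EuclideanSpace ℝ (Fin (n+1)), ‖t‖ < ε →
            ∀ lam : EuclideanSpace ℝ (Fin (n+1)),
              (∃ s : ℝ, ∃ w : EuclideanSpace ℝ (Fin (n+1)), ‖w‖ < 2 * δ ∧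
                lam = s • EuclideanSpace.single (0 : Fin (n+1)) (1:ℝ) + w) →
              lam ∉ Metric.ball (0 : EuclideanSpace ℝ (Fin (n+1))) R →
              (∫ x : EuclideanSpace ℝ (Fin (n+1)),
                  g x * conj (g (x - t)) *
                    Complex.exp (-(2 * π * Complex.I * (⟪lam, x⟫_ℝ : ℂ)))) ≠ 0 := by
  classical
  have hKint : (interior Ω).Nonempty := interior_of_vol Ω (by rw [hΩ]; exact convex_convexHull _ _) hvol
  obtain ⟨U, hu, hpar, hbd, l, h, hK, hl, hh⟩ := exists_slab S Ω hΩ hKint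
  let u : U → EuclideanSpace ℝ (Fin (n+1)) := Subtype.val
  have hu' : ∀ j, ‖u j‖ = 1 := fun j => hu j j.2
  have hpar' : ∀ j k, j ≠ k → ∀ t : ℝ, u j ≠ t • u k := fun j k hjk =>
    hpar j j.2 k k.2 (fun e => hjk (Subtype.ext e))
  choose T hT using fun j => exists_isom n (u j) (hu' j)
  obtain ⟨i, hi⟩ := exists_asymm u hu' hpar' hbd T hT l h Ω hK hl hh hKint hnonsym
  have hlh := strict_of_int u hu' l h Ω hK hKint
  set φ := rphi (T i) u with hφ
  obtain ⟨ε, hε, R, hcore⟩ := core φ i (rphi_fst u (T i) i (hT i)) (rphi_bd u hbd (T i))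
    (fun j k hjk s e => hpar' j k hjk s (ext_inner_right ℝ fun x => by
      rw [inner_smul_left, ← rphi_apply (T i) u j x, ← rphi_apply (T i) u k x, ← hφ, e]; simp))
    (rphi_par u hpar' (T i) i (hT i)) l h hlh hi
  obtain ⟨C, hC, hCw⟩ := wcl_small n
  set M := ‖((stdC n).toContinuousLinearMap)‖ + 1 with hM
  have hMpos : 0 < M := by positivity
  refine ⟨(T i).toLinearEquiv.toAffineEquiv, ε / M, by positivity, |R| + 4 * (ε / (2 * C)) + 1, by positivity,
    ε / (2 * C), by positivity, ?_⟩
  rintro Ω' hΩ' g rfl t ht lam ⟨s, w, hw, rfl⟩ hlam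
  have hmem : ∀ x, x ∈ Ω' ↔ stdC n x ∈ slabX φ l h := by
    intro x
    have e := rphi_slab u (T i) l h
    rw [hΩ', hK]
    constructor
    · rintro ⟨y, hy, rfl⟩
      have : y ∈ rotC (T i) ⁻¹' slabX φ l h := by rw [← e]; exact hy
      exact this
    · intro hx
      refine ⟨(T i).symm x, ?_, (T i).apply_symm_apply x⟩
      have : (T i).symm x ∈ rotC (T i) ⁻¹' slabX φ l h := by
        change stdC n (T i ((T i).symm x)) ∈ slabX φ l h
        rwa [(T i).apply_symm_apply x]
      rw [← e] at this
      exact this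
  have hΩv : volume Ω' = volume Ω := by
    rw [hΩ']
    have e1 := (T i).measurePreserving.measure_preimage_emb (T i).toHomeomorph.measurableEmbedding ((T i) '' Ω)
    rw [preimage_image_eq _ (T i).injective] at e1
    exact e1.symm
  have hpos : 0 < (volume Ω').toReal := by
    rw [hΩv]
    refine ENNReal.toReal_pos hvol.ne' ?_
    rw [hK]; exact (hbd l h).measure_lt_top.ne
  set a : ℝ := (volume Ω').toReal ^ (-(1:ℝ)/2) with ha
  have hapos : 0 < a := Real.rpow_pos_of_pos hpos _
  have hτ : ‖stdC n t‖ < ε := by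
    have h1 := (stdC n).toContinuousLinearMap.le_opNorm t
    rw [lt_div_iff₀ hMpos] at ht
    calc ‖stdC n t‖ ≤ _ := h1
      _ ≤ M * ‖t‖ := by gcongr; linarith
      _ < ε := by linarith
  have hws : ‖wcl n w‖ < ε := by
    refine (hCw w).trans_lt ?_
    calc C * ‖w‖ < C * (2 * (ε / (2 * C))) := by gcongr
      _ = ε := by field_simp
  have hw0 : |w 0| ≤ ‖w‖ := PiLp.norm_apply_le w 0
  have hσ : R ≤ |s + w 0| := by
    have h1 : |R| + 4 * (ε / (2 * C)) + 1 ≤ ‖s • EuclideanSpace.single (0 : Fin (n+1)) (1:ℝ) + w‖ := by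
      simpa using hlam
    have h2 := norm_add_le (s • EuclideanSpace.single (0 : Fin (n+1)) (1:ℝ)) w
    have h3 : ‖s • EuclideanSpace.single (0 : Fin (n+1)) (1:ℝ)‖ = |s| := by simp [norm_smul]
    rw [h3] at h2
    have h4 := abs_sub_abs_le_abs_sub s (-w 0)
    rw [abs_neg, sub_neg_eq_add] at h4
    linarith [le_abs_self R]
  have key := hcore (stdC n t) hτ (wcl n w) hws (s + w 0) hσ
  set A := {x | x ∈ slabX φ l h ∧ x - stdC n t ∈ slabX φ l h} with hA
  have hAm : MeasurableSet A :=
    ((slabX_closed φ l h).inter ((slabX_closed φ l h).preimage (by fun_prop : Continuous fun x : ℝ × (Fin n → ℝ) => x - stdC n t))).measurableSet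
  rw [← (stdC_mp n).setIntegral_preimage_emb (stdC n).toHomeomorph.measurableEmbedding] at key
  rw [← integral_indicator ((stdC n).continuous.measurable hAm)] at key
  have e : ∀ x, ((a : ℂ) * Set.indicator Ω' (fun _ => (1:ℂ)) x) * conj ((a : ℂ) * Set.indicator Ω' (fun _ => (1:ℂ)) (x - t)) *
      Complex.exp (-(2 * π * Complex.I * (⟪s • EuclideanSpace.single (0 : Fin (n+1)) (1:ℝ) + w, x⟫_ℝ : ℂ))) =
      (a:ℂ)^2 * (stdC n ⁻¹' A).indicator (fun x => ee ((s + w 0) * (stdC n x).1 + wcl n w (stdC n x).2)) x := by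
    intro x
    by_cases h1 : x ∈ Ω'
    · by_cases h2 : x - t ∈ Ω'
      · have hx : x ∈ stdC n ⁻¹' A := ⟨(hmem x).1 h1, by rw [← map_sub]; exact (hmem _).1 h2⟩
        rw [indicator_of_mem h1, indicator_of_mem h2, indicator_of_mem hx, ← wcl_inner, ee]
        simp [pow_two]
      · have hx : x ∉ stdC n ⁻¹' A := fun hx => h2 ((hmem _).2 (by rw [map_sub]; exact hx.2))
        rw [indicator_of_notMem h2, indicator_of_notMem hx]; simp
    · have hx : x ∉ stdC n ⁻¹' A := fun hx => h1 ((hmem _).2 hx.1)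
      rw [indicator_of_notMem h1, indicator_of_notMem hx]; simp
  simp only [e]
  rw [integral_const_mul]
  exact mul_ne_zero (pow_ne_zero _ (by exact_mod_cast hapos.ne')) key
end

/-- Let `Ω ⊆ ℝ^d` (`d ≥ 2`) be a compact convex polytope of positive
measure which is not centrally symmetric. Then after applying a suitable invertible affine
transformation `T` to `Ω`, there exist `ε > 0`, `R > 0`, `δ > 0` such that for all `t` with
`|t| < ε` and all `λ ∈ S(2δ) \ B_R(0)` (where `S(r) = {s e₁ + w : s ∈ ℝ, |w| < r}`), the
short-time Fourier transform `V_g g(t, λ)` of the window `g = |TΩ|^{-1/2} χ_{TΩ}` is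
nonzero. -/
theorem stft_nonvanishing_in_cylinder (d : ℕ) (hd : 2 ≤ d)
    (S : Finset (EuclideanSpace ℝ (Fin d)))
    (Ω : Set (EuclideanSpace ℝ (Fin d)))
    (hΩ : Ω = convexHull ℝ (S : Set (EuclideanSpace ℝ (Fin d))))
    (hvol : 0 < volume Ω)
    (hnonsym : ¬ ∃ c : EuclideanSpace ℝ (Fin d),
      (fun y => c - y) '' Ω = (fun y => y - c) '' Ω) :
    ∃ T : EuclideanSpace ℝ (Fin d) ≃ᵃ[ℝ] EuclideanSpace ℝ (Fin d),
      ∃ ε > (0:ℝ), ∃ R > (0:ℝ), ∃ δ > (0:ℝ),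
        ∀ Ω' : Set (EuclideanSpace ℝ (Fin d)), Ω' = T '' Ω →
          ∀ g : EuclideanSpace ℝ (Fin d) → ℂ,
            g = (fun x => (((volume Ω').toReal ^ (-(1:ℝ)/2) : ℝ) : ℂ) *
              Set.indicator Ω' (fun _ => (1:ℂ)) x) →
          ∀ t : EuclideanSpace ℝ (Fin d), ‖t‖ < ε →
            ∀ lam : EuclideanSpace ℝ (Fin d),
              (∃ s : ℝ, ∃ w : EuclideanSpace ℝ (Fin d), ‖w‖ < 2 * δ ∧
                lam = s • EuclideanSpace.single (⟨0, by omega⟩ : Fin d) (1:ℝ) + w) →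
              lam ∉ Metric.ball (0 : EuclideanSpace ℝ (Fin d)) R →
              (∫ x : EuclideanSpace ℝ (Fin d),
                  g x * conj (g (x - t)) *
                    Complex.exp (-(2 * π * Complex.I * (⟪lam, x⟫_ℝ : ℂ)))) ≠ 0 := by
  obtain ⟨n, rfl⟩ : ∃ n, d = n + 1 := ⟨d - 1, by omega⟩
  exact stft_aux n S Ω hΩ hvol hnonsym
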